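/- arXiv:1806.02456 — 2 statements merged into one kernel-verified Lean document; each statement's English description precedes it below -/
import Mathlib

section
/- Let u be a minimizer of the energy E. Then for every open interval J ⊆ I, the total variation of u over J is at most the total variation of f over J, i.e. eVariationOn u J ≤ eVariationOn f J. -/
open MeasureTheory Set Filter
open scoped ENNReal

noncomputable section

/-- Square-integrability of `w` on the set `S`. -/
def SqIntOn {n : ℕ} (w : ℝ → EuclideanSpace ℝ (Fin n)) (S : Set ℝ) : Prop :=
  MeasureTheory.IntegrableOn (fun x => ‖w x‖ ^ 2) S

/-- The Rudin–Osher–Fatemi energy with fidelity weight `1/(2 lam)`, datum `f`,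
on the interval `I = Ioo a b`. -/
def rofEnergy {n : ℕ} (lam a b : ℝ) (f w : ℝ → EuclideanSpace ℝ (Fin n)) : ℝ≥0∞ :=
  eVariationOn w (Set.Ioo a b) +
    ENNReal.ofReal ((1 / (2 * lam)) * ∫ x in Set.Ioo a b, ‖w x - f x‖ ^ 2)

/-- `u` is a minimizer of the ROF energy among Borel measurable functions
square-integrable on `Ioo a b`. -/
def IsMinimizer {n : ℕ} (lam a b : ℝ) (f u : ℝ → EuclideanSpace ℝ (Fin n)) : Prop :=
  Measurable u ∧ SqIntOn u (Set.Ioo a b) ∧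
    ∀ w : ℝ → EuclideanSpace ℝ (Fin n), Measurable w → SqIntOn w (Set.Ioo a b) →
      rofEnergy lam a b f u ≤ rofEnergy lam a b f w

/-!
Let `z` solve `lam • z' = u - f` on the interval, with `z = 0` at its left end. Perturbing the
minimizer `u` by a step function shows `‖z‖ ≤ 1`; replacing `u` by a constant on a short interval
and translating it on one side shows that `z • Du = |Du|`. Hence `u` is locally constant where
`‖z‖ < 1`. At a point `p` where `‖z p‖ = 1`, the increment of the variation of `u` from `p - y` to
`p + y` is to leading order at most that of `f` plus
`lam * ⟪z p, z' (p + y) - z' (p - y)⟫`, and the average of this error over `y ∈ (0, h)` is a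
multiple of `⟪z p, z (p + h) - 2 • z p + z (p - h)⟫ ≤ 0`.
In both cases the primitive of the difference of the variation functions of `u` and `f` has
nonpositive symmetric second differences at small scales, so it is concave, and the comparison of
the variation functions at nearby points becomes one over the whole interval.
-/

open scoped RealInnerProductSpace Topology

section Variation

variable {α E : Type*} [LinearOrder α] [SeminormedAddCommGroup E]

lemma eVariationOn_add_le (v w : α → E) (s : Set α) :
    eVariationOn (v + w) s ≤ eVariationOn v s + eVariationOn w s := by
  refine iSup_le fun ⟨m, p, hp, hps⟩ => ?_
  calc ∑ i ∈ Finset.range m, edist ((v + w) (p (i + 1))) ((v + w) (p i))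
      ≤ ∑ i ∈ Finset.range m,
          (edist (v (p (i + 1))) (v (p i)) + edist (w (p (i + 1))) (w (p i))) :=
        Finset.sum_le_sum fun i _ => edist_add_add_le _ _ _ _
    _ ≤ eVariationOn v s + eVariationOn w s := by
        rw [Finset.sum_add_distrib]
        exact add_le_add (eVariationOn.sum_le hp hps) (eVariationOn.sum_le hp hps)

lemma eVariationOn_const_smul_le [NormedSpace ℝ E] (c : ℝ) (w : α → E) (s : Set α) :
    eVariationOn (c • w) s ≤ ‖c‖₊ * eVariationOn w s :=
  (lipschitzWith_smul c).lipschitzOnWith.comp_eVariationOn_le (mapsTo_univ w s)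

lemma eVariationOn_add_smul_sub_le [NormedSpace ℝ E] {τ : ℝ} (hτ : τ ∈ Icc (0 : ℝ) 1)
    (v w : α → E) (s : Set α) :
    eVariationOn (v + τ • (w - v)) s ≤
      ENNReal.ofReal (1 - τ) * eVariationOn v s + ENNReal.ofReal τ * eVariationOn w s := by
  rw [show v + τ • (w - v) = (1 - τ) • v + τ • w by module]
  refine (eVariationOn_add_le _ _ s).trans (add_le_add ?_ ?_)
  · refine (eVariationOn_const_smul_le (1 - τ) v s).trans_eq ?_
    rw [← enorm_eq_nnnorm, Real.enorm_eq_ofReal (sub_nonneg.2 hτ.2)]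
  · refine (eVariationOn_const_smul_le τ w s).trans_eq ?_
    rw [← enorm_eq_nnnorm, Real.enorm_eq_ofReal hτ.1]

lemma boundedVariationOn_add_smul_sub [NormedSpace ℝ E] {τ : ℝ} (hτ : τ ∈ Icc (0 : ℝ) 1)
    {v w : α → E} {s : Set α} (hv : BoundedVariationOn v s) (hw : BoundedVariationOn w s) :
    BoundedVariationOn (v + τ • (w - v)) s :=
  ne_top_of_le_ne_top (by finiteness) (eVariationOn_add_smul_sub_le hτ v w s)

lemma toReal_eVariationOn_add_smul_sub_le [NormedSpace ℝ E] {τ : ℝ} (hτ : τ ∈ Icc (0 : ℝ) 1)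
    {v w : α → E} {s : Set α} (hv : BoundedVariationOn v s) (hw : BoundedVariationOn w s) :
    (eVariationOn (v + τ • (w - v)) s).toReal ≤
      (1 - τ) * (eVariationOn v s).toReal + τ * (eVariationOn w s).toReal := by
  refine (ENNReal.toReal_mono (by finiteness) (eVariationOn_add_smul_sub_le hτ v w s)).trans_eq ?_
  rw [ENNReal.toReal_add (by finiteness) (by finiteness), ENNReal.toReal_mul, ENNReal.toReal_mul,
    ENNReal.toReal_ofReal (sub_nonneg.2 hτ.2), ENNReal.toReal_ofReal hτ.1]

lemma eVariationOn_indicator_Iic_const_le (v : E) (x : α) (s : Set α) :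
    eVariationOn ((Iic x).indicator fun _ => v) s ≤ ‖v‖ₑ := by
  have factor : (Iic x).indicator (fun _ => v) =
      (fun b : Bool => if b then 0 else v) ∘ fun y => decide (x < y) := by
    ext y
    by_cases hy : y ≤ x <;> simp [hy]
  have mono : Monotone fun y => decide (x < y) := fun y z hyz =>
    Bool.le_iff_imp.2 fun hy => by simpa using (of_decide_eq_true hy).trans_le hyz
  calc eVariationOn ((Iic x).indicator fun _ => v) s
      ≤ eVariationOn (fun b : Bool => if b then 0 else v) {false, true} := by
        rw [factor]
        exact eVariationOn.comp_le_of_monotoneOn _ _ (mono.monotoneOn s) fun y _ => by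
          simp [le_or_gt]
    _ = ‖v‖ₑ := by simp [eVariationOn.pair]

/-- The function obtained from `u` by making it constant on `[s, t]`: it equals `u t` there, is
unchanged to the right of `t`, and is translated by `u t - u s` to the left of `s`, so that the
variation over `[s, t]` is removed and no other is created. -/
def collapseIcc (u : α → E) (s t : α) (x : α) : E :=
  u x + (u t - u (max s (min x t)))

variable {u : α → E} {S : Set α} {s t p x : α}

lemma collapseIcc_of_le_left (hst : s ≤ t) (hx : x ≤ s) :
    collapseIcc u s t x = u x + (u t - u s) := by
  rw [collapseIcc, min_eq_left (hx.trans hst), max_eq_left hx]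

lemma collapseIcc_of_mem_Icc (hx : x ∈ Icc s t) : collapseIcc u s t x = u t := by
  rw [collapseIcc, min_eq_left hx.2, max_eq_right hx.1, add_sub_cancel]

lemma collapseIcc_of_right_le (hst : s ≤ t) (hx : t ≤ x) : collapseIcc u s t x = u x := by
  rw [collapseIcc, min_eq_right hx, max_eq_right hst, sub_self, add_zero]

lemma eVariationOn_eq_Iic_add_Icc_add_Ici (w : α → E) (hs : s ∈ S) (ht : t ∈ S)
    (hst : s ≤ t) :
    eVariationOn w S = eVariationOn w (S ∩ Iic s) + eVariationOn w (S ∩ Icc s t) +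
      eVariationOn w (S ∩ Ici t) := by
  have left : eVariationOn w (S ∩ Iic t) =
      eVariationOn w (S ∩ Iic s) + eVariationOn w (S ∩ Icc s t) := by
    rw [← Iic_union_Icc_eq_Iic hst, inter_union_distrib_left]
    exact eVariationOn.union w ⟨⟨hs, le_rfl⟩, fun y hy => hy.2⟩
      ⟨⟨hs, le_rfl, hst⟩, fun y hy => hy.2.1⟩
  have right : eVariationOn w (S ∩ Iic t ∪ S ∩ Ici t) =
      eVariationOn w (S ∩ Iic t) + eVariationOn w (S ∩ Ici t) :=
    eVariationOn.union w ⟨⟨ht, le_rfl⟩, fun y hy => hy.2⟩ ⟨⟨ht, le_rfl⟩, fun y hy => hy.2⟩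
  rwa [← inter_union_distrib_left, Iic_union_Ici, inter_univ, left] at right

lemma eVariationOn_collapseIcc_add (u : α → E) (hs : s ∈ S) (ht : t ∈ S)
    (hst : s ≤ t) :
    eVariationOn (collapseIcc u s t) S + eVariationOn u (S ∩ Icc s t) = eVariationOn u S := by
  have left : eVariationOn (collapseIcc u s t) (S ∩ Iic s) = eVariationOn u (S ∩ Iic s) := by
    rw [eVariationOn.congr fun x hx => collapseIcc_of_le_left hst hx.2]
    simp only [eVariationOn, edist_add_right]
  have middle : eVariationOn (collapseIcc u s t) (S ∩ Icc s t) = 0 := by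
    rw [eVariationOn.congr fun x hx => collapseIcc_of_mem_Icc hx.2]
    simp [eVariationOn]
  have right : eVariationOn (collapseIcc u s t) (S ∩ Ici t) = eVariationOn u (S ∩ Ici t) :=
    eVariationOn.congr fun x hx => collapseIcc_of_right_le hst hx.2
  rw [eVariationOn_eq_Iic_add_Icc_add_Ici _ hs ht hst, left, middle, right,
    eVariationOn_eq_Iic_add_Icc_add_Ici u hs ht hst]
  ring

lemma max_min_mem_inter_Icc (hs : s ∈ S) (ht : t ∈ S) (hst : s ≤ t) (hx : x ∈ S) :
    max s (min x t) ∈ S ∩ Icc s t :=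
  ⟨max_rec' (· ∈ S) hs (min_rec' (· ∈ S) hx ht), le_max_left _ _, max_le hst (min_le_right _ _)⟩

lemma norm_collapseIcc_sub_le (hu : BoundedVariationOn u S) (hs : s ∈ S) (ht : t ∈ S)
    (hst : s ≤ t) (hx : x ∈ S) :
    ‖collapseIcc u s t x - u x‖ ≤ (eVariationOn u (S ∩ Icc s t)).toReal := by
  rw [collapseIcc, add_sub_cancel_left, ← dist_eq_norm]
  exact (hu.mono inter_subset_left).dist_le ⟨ht, right_mem_Icc.2 hst⟩
    (max_min_mem_inter_Icc hs ht hst hx)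

lemma norm_collapseIcc_sub_sub_indicator_le (hu : BoundedVariationOn u S) (hs : s ∈ S)
    (ht : t ∈ S) (hsp : s ≤ p) (hpt : p ≤ t) (hx : x ∈ S) :
    ‖collapseIcc u s t x - u x - (Iic p).indicator (fun _ => u t - u s) x‖ ≤
      (Ioc s t).indicator (fun _ => (eVariationOn u (S ∩ Icc s t)).toReal) x := by
  have hst := hsp.trans hpt
  rcases le_or_gt x s with hxs | hsx
  · simp [collapseIcc_of_le_left hst hxs, hxs.trans hsp, hxs.not_gt]
  rcases lt_or_ge t x with htx | hxt
  · simp [collapseIcc_of_right_le hst htx.le, (hpt.trans_lt htx).not_ge, htx.not_ge]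
  have hx' : x ∈ Ioc s t := ⟨hsx, hxt⟩
  rw [indicator_of_mem hx']
  rcases le_or_gt x p with hxp | hpx
  · rw [collapseIcc_of_mem_Icc (Ioc_subset_Icc_self hx'), indicator_of_mem (mem_Iic.2 hxp),
      sub_sub_sub_cancel_left, ← dist_eq_norm]
    exact (hu.mono inter_subset_left).dist_le ⟨hs, left_mem_Icc.2 hst⟩
      ⟨hx, Ioc_subset_Icc_self hx'⟩
  · rw [indicator_of_notMem (notMem_Iic.2 hpx), sub_zero]
    exact norm_collapseIcc_sub_le hu hs ht hst hx

end Variation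

section Analysis

lemma nonneg_of_forall_nonneg_add_mul {c d : ℝ} (h : ∀ τ ∈ Ioo (0 : ℝ) 1, 0 ≤ c + τ * d) :
    0 ≤ c := by
  have lim : Tendsto (fun τ => c + τ * d) (𝓝[>] 0) (𝓝 c) := by
    have : Continuous fun τ => c + τ * d := by fun_prop
    simpa using (this.tendsto 0).mono_left nhdsWithin_le_nhds
  exact ge_of_tendsto lim (mem_of_superset (Ioo_mem_nhdsGT one_pos) h)

/-- The symmetric increment of `g` at `p` with half-width `y`. -/
def symmIncr {E : Type*} [Sub E] (g : ℝ → E) (p y : ℝ) : E :=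
  g (p + y) - g (p - y)

lemma eventually_sub_mem_and_add_mem {U : Set ℝ} {p : ℝ} (hU : U ∈ 𝓝 p) :
    ∀ᶠ h in 𝓝[>] 0, 0 < h ∧ p - h ∈ U ∧ p + h ∈ U := by
  have sub : Tendsto (p - ·) (𝓝[>] 0) (𝓝 p) :=
    ((continuous_sub_left p).tendsto' 0 p (sub_zero p)).mono_left nhdsWithin_le_nhds
  have add : Tendsto (p + ·) (𝓝[>] 0) (𝓝 p) :=
    ((continuous_const_add p).tendsto' 0 p (add_zero p)).mono_left nhdsWithin_le_nhds
  filter_upwards [self_mem_nhdsWithin, sub hU, add hU] with h hh hsub hadd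
  exact ⟨hh, hsub, hadd⟩

section SymmIncr

variable {E : Type*} [NormedAddCommGroup E] {g : ℝ → E} {p h : ℝ}

lemma intervalIntegrable_comp_add_sub (hg : IntervalIntegrable g volume (p - h) (p + h))
    (hh : 0 ≤ h) :
    IntervalIntegrable (fun y => g (p + y)) volume 0 h ∧
      IntervalIntegrable (fun y => g (p - y)) volume 0 h := by
  have right : IntervalIntegrable g volume p (p + h) :=
    hg.mono_set (by rw [uIcc_of_le (by linarith), uIcc_of_le (by linarith)]; gcongr; linarith)
  have left : IntervalIntegrable g volume p (p - h) :=
    hg.mono_set (by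
      rw [uIcc_of_ge (by linarith), uIcc_of_le (by linarith)]; gcongr; linarith)
  exact ⟨by simpa using right.comp_add_left p, by simpa using left.comp_sub_left p⟩

lemma intervalIntegrable_symmIncr (hg : IntervalIntegrable g volume (p - h) (p + h))
    (hh : 0 ≤ h) : IntervalIntegrable (symmIncr g p) volume 0 h :=
  have ⟨right, left⟩ := intervalIntegrable_comp_add_sub hg hh
  right.sub left

lemma integral_symmIncr [NormedSpace ℝ E]
    (hg : IntervalIntegrable g volume (p - h) (p + h)) (hh : 0 ≤ h) :
    ∫ y in 0..h, symmIncr g p y = (∫ y in p..(p + h), g y) - ∫ y in (p - h)..p, g y := by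
  have ⟨right, left⟩ := intervalIntegrable_comp_add_sub hg hh
  simp only [symmIncr]
  rw [intervalIntegral.integral_sub right left, intervalIntegral.integral_comp_add_left,
    intervalIntegral.integral_comp_sub_left, add_zero, sub_zero]

end SymmIncr

lemma eventually_integral_le_of_eventually_le {f g : ℝ → ℝ} {a : ℝ}
    (hf : ∀ᶠ h in 𝓝[>] a, IntervalIntegrable f volume a h)
    (hg : ∀ᶠ h in 𝓝[>] a, IntervalIntegrable g volume a h)
    (hfg : ∀ᶠ y in 𝓝[>] a, f y ≤ g y) :
    ∀ᶠ h in 𝓝[>] a, ∫ y in a..h, f y ≤ ∫ y in a..h, g y := by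
  obtain ⟨δ, hδ, hle⟩ := mem_nhdsGT_iff_exists_Ioo_subset.1 hfg
  filter_upwards [hf, hg, Ioo_mem_nhdsGT hδ] with h hfh hgh hh
  exact intervalIntegral.integral_mono_on_of_le_Ioo hh.1.le hfh hgh fun y hy =>
    hle ⟨hy.1, hy.2.trans hh.2⟩

/-- At the leftmost minimum point `p`, the local inequality would force `D (p - h)` to be minimal
as well. -/
lemma nonneg_on_Icc_of_frequently_symm_le {D : ℝ → ℝ} {x y : ℝ} (hD : ContinuousOn D (Icc x y))
    (hx : 0 ≤ D x) (hy : 0 ≤ D y)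
    (hloc : ∀ p ∈ Ioo x y, ∃ᶠ h in 𝓝[>] 0, D (p + h) + D (p - h) ≤ 2 * D p) :
    ∀ q ∈ Icc x y, 0 ≤ D q := by
  intro q hq
  obtain ⟨m, hm, hmin⟩ := isCompact_Icc.exists_isMinOn ⟨q, hq⟩ hD
  by_contra! hneg
  have hDm : D m < 0 := (hmin hq).trans_lt hneg
  have compact : IsCompact (Icc x y ∩ D ⁻¹' {D m}) :=
    isCompact_Icc.of_isClosed_subset
      (hD.preimage_isClosed_of_isClosed isClosed_Icc isClosed_singleton) inter_subset_left
  obtain ⟨p, ⟨hp, hDp : D p = D m⟩, leftmost⟩ := compact.exists_isLeast ⟨m, hm, rfl⟩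
  have hpx : x < p := hp.1.lt_of_ne (by rintro rfl; linarith)
  have hpy : p < y := hp.2.lt_of_ne (by rintro rfl; linarith)
  obtain ⟨h, hsymm, hh, hsub, hadd⟩ := ((hloc p ⟨hpx, hpy⟩).and_eventually
    (eventually_sub_mem_and_add_mem (Icc_mem_nhds hpx hpy))).exists
  have right : D m ≤ D (p + h) := hmin hadd
  have left : D m < D (p - h) := by
    refine (hmin hsub).lt_of_ne fun heq => ?_
    have : p ≤ p - h := leftmost ⟨hsub, heq.symm⟩
    linarith
  linarith

lemma concaveOn_Icc_of_frequently_symm_le {H : ℝ → ℝ} {α β : ℝ}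
    (hH : ContinuousOn H (Icc α β))
    (hloc : ∀ p ∈ Ioo α β, ∃ᶠ h in 𝓝[>] 0, H (p + h) + H (p - h) ≤ 2 * H p) :
    ConcaveOn ℝ (Icc α β) H := by
  refine LinearOrder.concaveOn_of_lt (convex_Icc α β) fun x hx y hy hxy a b ha hb hab => ?_
  have hab' : a = 1 - b := by linarith
  set c := (H y - H x) / (y - x)
  have hc : c * (y - x) = H y - H x := div_mul_cancel₀ _ (sub_ne_zero.2 hxy.ne')
  have above_chord : ∀ q ∈ Icc x y, 0 ≤ H q - (H x + c * (q - x)) := by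
    refine nonneg_on_Icc_of_frequently_symm_le ?_ ?_ ?_ ?_
    · exact (hH.mono (Icc_subset_Icc hx.1 hy.2)).sub (by fun_prop)
    · simp
    · linarith
    · refine fun p hp => (hloc p (Ioo_subset_Ioo hx.1 hy.2 hp)).mono fun h hh => ?_
      linarith
  have := above_chord (a • x + b • y) (convex_Icc x y (left_mem_Icc.2 hxy.le)
    (right_mem_Icc.2 hxy.le) ha.le hb.le hab)
  simp only [smul_eq_mul, hab'] at this ⊢
  linear_combination this - b * hc

lemma mul_sub_le_integral_sub {P Q : ℝ → ℝ} {a b : ℝ} (hab : a ≤ b)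
    (hP : MonotoneOn P (Icc a b)) (hQ : MonotoneOn Q (Icc a b)) :
    (P a - Q b) * (b - a) ≤ ∫ y in a..b, (P y - Q y) := by
  have hPi : IntervalIntegrable P volume a b :=
    MonotoneOn.intervalIntegrable (by rwa [uIcc_of_le hab])
  have hQi : IntervalIntegrable Q volume a b :=
    MonotoneOn.intervalIntegrable (by rwa [uIcc_of_le hab])
  calc (P a - Q b) * (b - a)
      = ∫ _ in a..b, (P a - Q b) := by
        rw [intervalIntegral.integral_const, smul_eq_mul, mul_comm]
    _ ≤ ∫ y in a..b, (P y - Q y) :=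
        intervalIntegral.integral_mono_on hab intervalIntegrable_const (hPi.sub hQi) fun y hy =>
          sub_le_sub (hP (left_mem_Icc.2 hab) hy hy.1) (hQ hy (right_mem_Icc.2 hab) hy.2)

lemma concaveOn_primitive_of_frequently_integral_symmIncr_nonpos {G : ℝ → ℝ} {α β : ℝ}
    (hαβ : α ≤ β) (hG : IntervalIntegrable G volume α β)
    (hloc : ∀ p ∈ Ioo α β, ∃ᶠ h in 𝓝[>] 0, ∫ y in 0..h, symmIncr G p y ≤ 0) :
    ConcaveOn ℝ (Icc α β) fun x => ∫ y in α..x, G y := by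
  have hGsub : ∀ x ∈ Icc α β, ∀ y ∈ Icc α β, IntervalIntegrable G volume x y :=
    fun x hx y hy => hG.mono_set (by rw [uIcc_of_le hαβ]; exact uIcc_subset_Icc hx hy)
  have hα : α ∈ Icc α β := left_mem_Icc.2 hαβ
  refine concaveOn_Icc_of_frequently_symm_le ?_ fun p hp => ?_
  · rw [← uIcc_of_le hαβ]
    exact intervalIntegral.continuousOn_primitive_interval' hG left_mem_uIcc
  refine ((hloc p hp).and_eventually
    (eventually_sub_mem_and_add_mem (Icc_mem_nhds hp.1 hp.2))).mono ?_
  rintro h ⟨hnonpos, hh, hsub, hadd⟩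
  have hp' : p ∈ Icc α β := Ioo_subset_Icc_self hp
  rw [integral_symmIncr (hGsub _ hsub _ hadd) hh.le] at hnonpos
  have right := intervalIntegral.integral_add_adjacent_intervals (hGsub _ hα _ hp')
    (hGsub _ hp' _ hadd)
  have left := intervalIntegral.integral_add_adjacent_intervals (hGsub _ hα _ hsub)
    (hGsub _ hsub _ hp')
  linarith

lemma concaveOn_primitive_sub_of_frequently_integral_symmIncr_le {P Q : ℝ → ℝ} {α β : ℝ}
    (hαβ : α ≤ β) (hP : MonotoneOn P (Icc α β)) (hQ : MonotoneOn Q (Icc α β))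
    (hloc : ∀ p ∈ Ioo α β, ∃ᶠ h in 𝓝[>] 0,
      ∫ y in 0..h, symmIncr P p y ≤ ∫ y in 0..h, symmIncr Q p y) :
    ConcaveOn ℝ (Icc α β) fun x => ∫ y in α..x, (P y - Q y) := by
  rw [← uIcc_of_le hαβ] at hP hQ
  refine concaveOn_primitive_of_frequently_integral_symmIncr_nonpos hαβ
    (hP.intervalIntegrable.sub hQ.intervalIntegrable) fun p hp => ?_
  refine ((hloc p hp).and_eventually
    (eventually_sub_mem_and_add_mem (Icc_mem_nhds hp.1 hp.2))).mono ?_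
  rintro h ⟨hle, hh, hsub, hadd⟩
  rw [← uIcc_of_le hαβ] at hsub hadd
  have hsubset : uIcc (p - h) (p + h) ⊆ uIcc α β := uIcc_subset_uIcc hsub hadd
  have hPi := intervalIntegrable_symmIncr (hP.mono hsubset).intervalIntegrable hh.le
  have hQi := intervalIntegrable_symmIncr (hQ.mono hsubset).intervalIntegrable hh.le
  calc ∫ y in 0..h, symmIncr (fun y => P y - Q y) p y
      = ∫ y in 0..h, (symmIncr P p y - symmIncr Q p y) := by
        simp only [symmIncr, sub_sub_sub_comm]
    _ = (∫ y in 0..h, symmIncr P p y) - ∫ y in 0..h, symmIncr Q p y :=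
        intervalIntegral.integral_sub hPi hQi
    _ ≤ 0 := sub_nonpos.2 hle

/-- The primitive of `P - Q` is concave; by monotonicity its slope is at most `P s - Q s'` over
`[s', s]` and at least `P t - Q t'` over `[t, t']`. -/
lemma sub_le_sub_of_frequently_integral_symmIncr_le {P Q : ℝ → ℝ} {s' s t t' : ℝ}
    (hP : MonotoneOn P (Icc s' t')) (hQ : MonotoneOn Q (Icc s' t'))
    (hs : s' < s) (hst : s < t) (ht : t < t')
    (hloc : ∀ p ∈ Ioo s' t', ∃ᶠ h in 𝓝[>] 0,
      ∫ y in 0..h, symmIncr P p y ≤ ∫ y in 0..h, symmIncr Q p y) :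
    P t - P s ≤ Q t' - Q s' := by
  have hst' : s' ≤ t' := by linarith
  set H : ℝ → ℝ := fun x => ∫ y in s'..x, (P y - Q y)
  have concave : ConcaveOn ℝ (Icc s' t') H :=
    concaveOn_primitive_sub_of_frequently_integral_symmIncr_le hst' hP hQ hloc
  have slopes : (H t' - H t) / (t' - t) ≤ (H s - H s') / (s - s') :=
    (concave.slope_anti_adjacent ⟨by linarith, by linarith⟩ (right_mem_Icc.2 hst') hst ht).trans
      (concave.slope_anti_adjacent (left_mem_Icc.2 hst') ⟨by linarith, by linarith⟩ hs hst)
  have left_avg : (H s - H s') / (s - s') ≤ P s - Q s' := by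
    have := mul_sub_le_integral_sub hs.le (hQ.mono (Icc_subset_Icc_right (by linarith)))
      (hP.mono (Icc_subset_Icc_right (by linarith)))
    have neg : ∫ y in s'..s, (Q y - P y) = -H s := by
      simp only [H, ← intervalIntegral.integral_neg, neg_sub]
    have start : H s' = 0 := intervalIntegral.integral_same
    rw [div_le_iff₀ (sub_pos.2 hs)]
    linarith
  have right_avg : P t - Q t' ≤ (H t' - H t) / (t' - t) := by
    have hPQ : IntervalIntegrable (fun y => P y - Q y) volume s' t' := by
      rw [← uIcc_of_le hst'] at hP hQ
      exact hP.intervalIntegrable.sub hQ.intervalIntegrable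
    have incr : H t' - H t = ∫ y in t..t', (P y - Q y) :=
      intervalIntegral.integral_interval_sub_left hPQ
        (hPQ.mono_set (uIcc_subset_uIcc_left (mem_uIcc_of_le (by linarith) ht.le)))
    rw [le_div_iff₀ (sub_pos.2 ht), incr]
    exact mul_sub_le_integral_sub ht.le (hP.mono (Icc_subset_Icc_left (by linarith)))
      (hQ.mono (Icc_subset_Icc_left (by linarith)))
  linarith

end Analysis

section InnerIntegrals

variable {E : Type*} [NormedAddCommGroup E]

lemma stronglyMeasurable_collapseIcc {u : ℝ → E} (hu : StronglyMeasurable u) (s t : ℝ) :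
    StronglyMeasurable (collapseIcc u s t) :=
  hu.add (stronglyMeasurable_const.sub (hu.comp_measurable (by fun_prop)))

variable [InnerProductSpace ℝ E] {Ω : Type*} [MeasurableSpace Ω] {μ : Measure Ω}

lemma integrable_inner_of_memLp_two {g φ : Ω → E} (hg : MemLp g 2 μ) (hφ : MemLp φ 2 μ) :
    Integrable (fun x => ⟪g x, φ x⟫) μ :=
  (hg.norm.integrable_mul hφ.norm).mono' (hg.1.inner hφ.1)
    (.of_forall fun _ => norm_inner_le_norm _ _)

lemma integral_norm_add_smul_sq {g φ : Ω → E} (hg : MemLp g 2 μ) (hφ : MemLp φ 2 μ) (τ : ℝ) :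
    ∫ x, ‖g x + τ • φ x‖ ^ 2 ∂μ =
      ∫ x, ‖g x‖ ^ 2 ∂μ + 2 * τ * ∫ x, ⟪g x, φ x⟫ ∂μ + τ ^ 2 * ∫ x, ‖φ x‖ ^ 2 ∂μ := by
  have hg_sq := (memLp_two_iff_integrable_sq_norm hg.1).1 hg
  have hφ_sq := (memLp_two_iff_integrable_sq_norm hφ.1).1 hφ
  have inner_int := (integrable_inner_of_memLp_two hg hφ).const_mul (2 * τ)
  have sum_int : Integrable (fun x => ‖g x‖ ^ 2 + 2 * τ * ⟪g x, φ x⟫) μ := hg_sq.add inner_int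
  calc ∫ x, ‖g x + τ • φ x‖ ^ 2 ∂μ
      = ∫ x, (‖g x‖ ^ 2 + 2 * τ * ⟪g x, φ x⟫ + τ ^ 2 * ‖φ x‖ ^ 2) ∂μ := by
        congr with x
        rw [norm_add_sq_real, inner_smul_right, norm_smul, mul_pow, Real.norm_eq_abs, sq_abs]
        ring
    _ = _ := by
        rw [integral_add sum_int (hφ_sq.const_mul _), integral_add hg_sq inner_int,
          integral_const_mul, integral_const_mul]

lemma integrable_inner_of_norm_le {k φ : Ω → E}
    {C : ℝ} (hk : Integrable k μ) (hφ : AEStronglyMeasurable φ μ)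
    (hC : ∀ x, k x ≠ 0 → ‖φ x‖ ≤ C) : Integrable (fun x => ⟪k x, φ x⟫) μ := by
  refine (hk.norm.mul_const C).mono' (hk.1.inner hφ) (.of_forall fun x => ?_)
  by_cases hx : k x = 0
  · simp [hx]
  · exact (norm_inner_le_norm _ _).trans (by grw [hC x hx])

variable [CompleteSpace E]

lemma integral_inner_indicator_const {k : Ω → E}
    {A : Set Ω} (hA : MeasurableSet A) (hk : Integrable k μ) (v : E) :
    ∫ x, ⟪k x, A.indicator (fun _ => v) x⟫ ∂μ = ⟪∫ x in A, k x ∂μ, v⟫ := by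
  have : ∀ x, ⟪k x, A.indicator (fun _ => v) x⟫ = A.indicator (fun x => ⟪v, k x⟫) x := fun x => by
    by_cases hx : x ∈ A <;> simp [hx, real_inner_comm]
  simp only [this]
  rw [integral_indicator hA, integral_inner hk.integrableOn, real_inner_comm]

lemma integral_inner_collapseIcc_sub_le {k u : ℝ → E} {S : Set ℝ} {s p t : ℝ} (hk : Integrable k)
    (hkS : ∀ x ∉ S, k x = 0) (hu_meas : StronglyMeasurable u) (hu : BoundedVariationOn u S)
    (hs : s ∈ S) (ht : t ∈ S) (hsp : s ≤ p) (hpt : p ≤ t) :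
    ∫ x, ⟪k x, collapseIcc u s t x - u x⟫ ≤ ⟪∫ x in Iic p, k x, u t - u s⟫ +
      (eVariationOn u (S ∩ Icc s t)).toReal * ∫ x in s..t, ‖k x‖ := by
  have hst := hsp.trans hpt
  set V := (eVariationOn u (S ∩ Icc s t)).toReal
  set step := (Iic p).indicator fun _ => u t - u s
  have pointwise : ∀ x, ⟪k x, collapseIcc u s t x - u x⟫ ≤
      ⟪k x, step x⟫ + (Ioc s t).indicator (fun x => V * ‖k x‖) x := fun x => by
    by_cases hx : x ∈ S
    · rw [← sub_le_iff_le_add', ← inner_sub_right]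
      refine (real_inner_le_norm _ _).trans ?_
      grw [norm_collapseIcc_sub_sub_indicator_le hu hs ht hsp hpt hx]
      by_cases hxst : x ∈ Ioc s t <;> simp [hxst, V, mul_comm]
    · by_cases hxst : x ∈ Ioc s t <;> simp [hkS x hx, hxst]
  have collapse_int : Integrable fun x => ⟪k x, collapseIcc u s t x - u x⟫ :=
    integrable_inner_of_norm_le (C := V) hk
      ((stronglyMeasurable_collapseIcc hu_meas s t).sub hu_meas).aestronglyMeasurable fun x hx =>
      norm_collapseIcc_sub_le hu hs ht hst (not_imp_comm.1 (hkS x) hx)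
  have step_int : Integrable fun x => ⟪k x, step x⟫ :=
    integrable_inner_of_norm_le hk
      (stronglyMeasurable_const.indicator measurableSet_Iic).aestronglyMeasurable
      fun x _ => norm_indicator_le_norm_self _ x
  have rest_int : Integrable ((Ioc s t).indicator fun x => V * ‖k x‖) :=
    (hk.norm.const_mul V).indicator measurableSet_Ioc
  calc ∫ x, ⟪k x, collapseIcc u s t x - u x⟫
      ≤ ∫ x, (⟪k x, step x⟫ + (Ioc s t).indicator (fun x => V * ‖k x‖) x) :=
        integral_mono collapse_int (step_int.add rest_int) pointwise
    _ = ⟪∫ x in Iic p, k x, u t - u s⟫ + V * ∫ x in s..t, ‖k x‖ := by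
        rw [integral_add step_int rest_int, integral_inner_indicator_const measurableSet_Iic hk,
          integral_indicator measurableSet_Ioc, ← intervalIntegral.integral_of_le hst,
          intervalIntegral.integral_const_mul]

end InnerIntegrals

section Minimizers

variable {E : Type*} [NormedAddCommGroup E]

/-- The Rudin–Osher–Fatemi energy of `w` on `I` with datum `f` and fidelity weight `1 / (2 * lam)`,
for functions with values in a normed space; `rofEnergy` is the case `I = Ioo a b` and
`E = EuclideanSpace ℝ (Fin n)`. -/
def tvEnergy (lam : ℝ) (I : Set ℝ) (f w : ℝ → E) : ℝ≥0∞ :=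
  eVariationOn w I + ENNReal.ofReal ((1 / (2 * lam)) * ∫ x in I, ‖w x - f x‖ ^ 2)

/-- `u` minimizes `tvEnergy lam I f` among the strongly measurable functions that are
square-integrable on `I`. -/
structure IsTVMinimizer (lam : ℝ) (I : Set ℝ) (f u : ℝ → E) : Prop where
  stronglyMeasurable : StronglyMeasurable u
  memLp : MemLp u 2 (volume.restrict I)
  energy_le : ∀ w, StronglyMeasurable w → MemLp w 2 (volume.restrict I) →
    tvEnergy lam I f u ≤ tvEnergy lam I f w

variable {lam : ℝ} {I : Set ℝ} {f u w : ℝ → E}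

lemma tvEnergy_toReal (hlam : 0 < lam) (hw : BoundedVariationOn w I) :
    (tvEnergy lam I f w).toReal =
      (eVariationOn w I).toReal + (1 / (2 * lam)) * ∫ x in I, ‖w x - f x‖ ^ 2 := by
  have : 0 ≤ ∫ x in I, ‖w x - f x‖ ^ 2 := integral_nonneg fun _ => by positivity
  rw [tvEnergy, ENNReal.toReal_add hw ENNReal.ofReal_ne_top, ENNReal.toReal_ofReal (by positivity)]

lemma tvEnergy_ne_top (hw : BoundedVariationOn w I) : tvEnergy lam I f w ≠ ∞ :=
  ENNReal.add_ne_top.2 ⟨hw, ENNReal.ofReal_ne_top⟩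

lemma IsTVMinimizer.boundedVariationOn (hu : IsTVMinimizer lam I f u) :
    BoundedVariationOn u I := by
  have zero : BoundedVariationOn (0 : ℝ → E) I := by
    simp [BoundedVariationOn, eVariationOn]
  exact ne_top_of_le_ne_top (tvEnergy_ne_top zero)
    (le_self_add.trans (hu.energy_le 0 stronglyMeasurable_zero MemLp.zero))

variable [InnerProductSpace ℝ E]

lemma IsTVMinimizer.eVariationOn_le_add_integral_inner (hlam : 0 < lam)
    (hf : MemLp f 2 (volume.restrict I)) (hu : IsTVMinimizer lam I f u)
    (hw_meas : StronglyMeasurable w) (hw : MemLp w 2 (volume.restrict I))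
    (hw_bv : BoundedVariationOn w I) :
    (eVariationOn u I).toReal ≤
      (eVariationOn w I).toReal + lam⁻¹ * ∫ x in I, ⟪u x - f x, w x - u x⟫ := by
  have hu_bv := hu.boundedVariationOn
  set c := ∫ x in I, ⟪u x - f x, w x - u x⟫
  set d := ∫ x in I, ‖w x - u x‖ ^ 2
  rw [← sub_nonneg]
  refine nonneg_of_forall_nonneg_add_mul (d := (1 / (2 * lam)) * d) fun τ hτ => ?_
  have hτ' : τ ∈ Icc (0 : ℝ) 1 := Ioo_subset_Icc_self hτ
  have competitor_bv := boundedVariationOn_add_smul_sub hτ' hu_bv hw_bv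
  have variation_le := toReal_eVariationOn_add_smul_sub_le hτ' hu_bv hw_bv
  have energy_le := ENNReal.toReal_mono (tvEnergy_ne_top competitor_bv)
    (hu.energy_le (u + τ • (w - u))
      (hu.stronglyMeasurable.add ((hw_meas.sub hu.stronglyMeasurable).const_smul τ))
      (hu.memLp.add ((hw.sub hu.memLp).const_smul τ)))
  rw [tvEnergy_toReal hlam hu_bv, tvEnergy_toReal hlam competitor_bv] at energy_le
  have expand : ∫ x in I, ‖(u + τ • (w - u)) x - f x‖ ^ 2 =
      (∫ x in I, ‖u x - f x‖ ^ 2) + 2 * τ * c + τ ^ 2 * d := by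
    simpa only [Pi.add_apply, Pi.smul_apply, Pi.sub_apply, add_sub_right_comm]
      using integral_norm_add_smul_sq (hu.memLp.sub hf) (hw.sub hu.memLp) τ
  rw [expand] at energy_le
  refine nonneg_of_mul_nonneg_right (a := τ) ?_ hτ.1
  linear_combination energy_le + variation_le

/-- The density of the dual variable `z x = ∫ y in Iic x, dualDensity lam I f u y`, which solves
`lam • z' = u - f` on `I` with `z = 0` to the left of `I`. -/
def dualDensity (lam : ℝ) (I : Set ℝ) (f u : ℝ → E) : ℝ → E :=
  I.indicator fun x => lam⁻¹ • (u x - f x)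

lemma integrable_dualDensity (hI : MeasurableSet I) (hI_fin : volume I ≠ ∞)
    (hf : MemLp f 2 (volume.restrict I)) (hu : MemLp u 2 (volume.restrict I)) :
    Integrable (dualDensity lam I f u) := by
  have := isFiniteMeasure_restrict.2 hI_fin
  exact (integrable_indicator_iff hI).2 (((hu.sub hf).integrable one_le_two).smul lam⁻¹)

lemma IsTVMinimizer.eVariationOn_le_add_integral_inner_dualDensity (hlam : 0 < lam)
    (hI : MeasurableSet I) (hf : MemLp f 2 (volume.restrict I)) (hu : IsTVMinimizer lam I f u)
    (hw_meas : StronglyMeasurable w) (hw : MemLp w 2 (volume.restrict I))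
    (hw_bv : BoundedVariationOn w I) :
    (eVariationOn u I).toReal ≤
      (eVariationOn w I).toReal + ∫ x, ⟪dualDensity lam I f u x, w x - u x⟫ := by
  refine (hu.eVariationOn_le_add_integral_inner hlam hf hw_meas hw hw_bv).trans_eq ?_
  rw [← integral_const_mul, ← integral_indicator hI]
  congr with x
  by_cases hx : x ∈ I <;> simp [dualDensity, hx, real_inner_smul_left]

variable [CompleteSpace E]

lemma IsTVMinimizer.norm_integral_dualDensity_le_one (hlam : 0 < lam) (hI : MeasurableSet I)
    (hI_fin : volume I ≠ ∞) (hf : MemLp f 2 (volume.restrict I)) (hu : IsTVMinimizer lam I f u)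
    (x : ℝ) : ‖∫ y in Iic x, dualDensity lam I f u y‖ ≤ 1 := by
  have := isFiniteMeasure_restrict.2 hI_fin
  have hu_bv : eVariationOn u I ≠ ∞ := hu.boundedVariationOn
  set q := ∫ y in Iic x, dualDensity lam I f u y
  set jump : ℝ → E := (Iic x).indicator fun _ => -q
  have jump_le : eVariationOn (u + jump) I ≤ eVariationOn u I + ‖q‖ₑ :=
    (eVariationOn_add_le u jump I).trans
      (by grw [eVariationOn_indicator_Iic_const_le, enorm_neg])
  have jump_le_real := ENNReal.toReal_mono (by finiteness) jump_le
  rw [ENNReal.toReal_add hu_bv enorm_ne_top, toReal_enorm] at jump_le_real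
  have le := hu.eVariationOn_le_add_integral_inner_dualDensity hlam hI hf
    (hu.stronglyMeasurable.add (stronglyMeasurable_const.indicator measurableSet_Iic))
    (hu.memLp.add ((memLp_const (-q)).indicator measurableSet_Iic))
    (ne_top_of_le_ne_top (by finiteness) jump_le)
  have integral_eq : ∫ y, ⟪dualDensity lam I f u y, (u + jump) y - u y⟫ = -‖q‖ ^ 2 := by
    simp only [Pi.add_apply, add_sub_cancel_left, jump]
    rw [integral_inner_indicator_const measurableSet_Iic
      (integrable_dualDensity hI hI_fin hf hu.memLp), inner_neg_right, real_inner_self_eq_norm_sq]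
  by_contra! one_lt
  nlinarith

lemma IsTVMinimizer.mul_eVariationOn_le_inner (hlam : 0 < lam) (hI : MeasurableSet I)
    (hI_fin : volume I ≠ ∞) (hf : MemLp f 2 (volume.restrict I)) (hu : IsTVMinimizer lam I f u)
    {s p t : ℝ} (hs : s ∈ I) (ht : t ∈ I) (hsp : s ≤ p) (hpt : p ≤ t) :
    (1 - ∫ y in s..t, ‖dualDensity lam I f u y‖) * (eVariationOn u (I ∩ Icc s t)).toReal ≤
      ⟪∫ y in Iic p, dualDensity lam I f u y, u t - u s⟫ := by
  have := isFiniteMeasure_restrict.2 hI_fin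
  have hu_bv := hu.boundedVariationOn
  have hst := hsp.trans hpt
  have collapse_add := eVariationOn_collapseIcc_add u hs ht hst
  have collapse_bv : BoundedVariationOn (collapseIcc u s t) I :=
    ne_top_of_le_ne_top hu_bv (le_self_add.trans_eq collapse_add)
  have collapse_meas := stronglyMeasurable_collapseIcc hu.stronglyMeasurable s t
  have diff_memLp : MemLp (collapseIcc u s t - u) 2 (volume.restrict I) :=
    .of_bound (collapse_meas.sub hu.stronglyMeasurable).aestronglyMeasurable _
      (ae_restrict_of_forall_mem hI fun x hx => norm_collapseIcc_sub_le hu_bv hs ht hst hx)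
  have collapse_memLp : MemLp (collapseIcc u s t) 2 (volume.restrict I) := by
    simpa using diff_memLp.add hu.memLp
  have le := hu.eVariationOn_le_add_integral_inner_dualDensity hlam hI hf collapse_meas
    collapse_memLp collapse_bv
  have inner_le := integral_inner_collapseIcc_sub_le (p := p)
    (integrable_dualDensity (lam := lam) hI hI_fin hf hu.memLp)
    (fun x hx => indicator_of_notMem hx _) hu.stronglyMeasurable hu_bv hs ht hsp hpt
  rw [← collapse_add, ENNReal.toReal_add collapse_bv (hu_bv.mono inter_subset_left)] at le
  linarith

/-- The optimality conditions satisfied on `J` by a minimizer `u` with datum `f`, expressed by the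
density `k` of the dual variable `z x = ∫ y in Iic x, k y`: the equation `lam • z' = u - f`, the
constraint `‖z‖ ≤ 1`, and the alignment `z • Du = |Du|`, stated through increments of `u` and
hence with an error controlled by the oscillation of `z`. -/
structure IsCalibratedBy (lam : ℝ) (J : Set ℝ) (f u k : ℝ → E) : Prop where
  boundedVariationOn : BoundedVariationOn u J
  integrable : Integrable k
  sub_eq : ∀ x ∈ J, u x - f x = lam • k x
  norm_integral_le_one : ∀ x ∈ J, ‖∫ y in Iic x, k y‖ ≤ 1
  mul_eVariationOn_le_inner : ∀ s ∈ J, ∀ t ∈ J, ∀ p ∈ Icc s t,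
    (1 - ∫ y in s..t, ‖k y‖) * (eVariationOn u (Icc s t)).toReal ≤
      ⟪∫ y in Iic p, k y, u t - u s⟫

lemma IsTVMinimizer.isCalibratedBy (hlam : 0 < lam) (hI : MeasurableSet I)
    (hI_fin : volume I ≠ ∞) (hf : MemLp f 2 (volume.restrict I)) (hu : IsTVMinimizer lam I f u)
    {J : Set ℝ} (hJI : J ⊆ I) (hJ : J.OrdConnected) :
    IsCalibratedBy lam J f u (dualDensity lam I f u) where
  boundedVariationOn := hu.boundedVariationOn.mono hJI
  integrable := integrable_dualDensity hI hI_fin hf hu.memLp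
  sub_eq x hx := by
    rw [dualDensity, indicator_of_mem (hJI hx), smul_inv_smul₀ hlam.ne']
  norm_integral_le_one x _ := hu.norm_integral_dualDensity_le_one hlam hI hI_fin hf x
  mul_eVariationOn_le_inner s hs t ht p hp := by
    have le := hu.mul_eVariationOn_le_inner hlam hI hI_fin hf (hJI hs) (hJI ht) hp.1 hp.2
    rwa [inter_eq_self_of_subset_right ((hJ.out hs ht).trans hJI)] at le

end Minimizers

section Comparison

lemma variationOnFromTo_sub_variationOnFromTo {α E : Type*} [LinearOrder α]
    [PseudoEMetricSpace E] {g : α → E} {S : Set α} (hg : LocallyBoundedVariationOn g S)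
    (hS : S.OrdConnected) {e x y : α} (he : e ∈ S) (hx : x ∈ S) (hy : y ∈ S) (hxy : x ≤ y) :
    variationOnFromTo g S e y - variationOnFromTo g S e x = (eVariationOn g (Icc x y)).toReal := by
  rw [← variationOnFromTo.add hg he hx hy, add_sub_cancel_left, variationOnFromTo.eq_of_le g S hxy,
    inter_eq_self_of_subset_right (hS.out hx hy)]

lemma norm_sub_le_variationOnFromTo_sub {α E : Type*} [LinearOrder α]
    [SeminormedAddCommGroup E] {g : α → E} {S : Set α} (hg : LocallyBoundedVariationOn g S)
    (hS : S.OrdConnected) {e x y : α} (he : e ∈ S) (hx : x ∈ S) (hy : y ∈ S) (hxy : x ≤ y) :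
    ‖g y - g x‖ ≤ variationOnFromTo g S e y - variationOnFromTo g S e x := by
  have bv : BoundedVariationOn g (Icc x y) := by
    simpa only [inter_eq_self_of_subset_right (hS.out hx hy)] using hg x y hx hy
  rw [variationOnFromTo_sub_variationOnFromTo hg hS he hx hy hxy, ← dist_eq_norm]
  exact bv.dist_le (right_mem_Icc.2 hxy) (left_mem_Icc.2 hxy)

lemma eventually_intervalIntegrable_symmIncr {g : ℝ → ℝ} {U : Set ℝ} {p : ℝ} (hU : U ∈ 𝓝 p)
    (hU_conn : U.OrdConnected) (hg : MonotoneOn g U) :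
    ∀ᶠ h in 𝓝[>] 0, IntervalIntegrable (symmIncr g p) volume 0 h := by
  filter_upwards [eventually_sub_mem_and_add_mem hU] with h ⟨hh, hsub, hadd⟩
  exact intervalIntegrable_symmIncr (hg.mono (hU_conn.uIcc_subset hsub hadd)).intervalIntegrable
    hh.le

variable {E : Type*} [NormedAddCommGroup E] {k : ℝ → E}

lemma eventually_integral_norm_lt (hk : Integrable k) (p : ℝ) {ε : ℝ} (hε : 0 < ε) :
    ∀ᶠ y in 𝓝[>] 0, ∫ x in (p - y)..(p + y), ‖k x‖ < ε := by
  have hint : ∀ a b, IntervalIntegrable (fun x => ‖k x‖) volume a b := fun a b =>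
    hk.norm.intervalIntegrable
  have primitive := intervalIntegral.continuous_primitive hint p
  have cont : Continuous fun y => (∫ x in p..(p + y), ‖k x‖) - ∫ x in p..(p - y), ‖k x‖ := by
    fun_prop
  simp only [intervalIntegral.integral_interval_sub_left (hint _ _) (hint _ _)] at cont
  exact ((cont.tendsto' 0 0 (by simp)).mono_left nhdsWithin_le_nhds).eventually_lt_const hε

variable [InnerProductSpace ℝ E]

lemma intervalIntegrable_inner_symmIncr (hk : Integrable k) (q : E) (p : ℝ) {h : ℝ}
    (hh : 0 ≤ h) : IntervalIntegrable (fun y => ⟪q, symmIncr k p y⟫) volume 0 h :=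
  have hk_symm := intervalIntegrable_symmIncr (p := p) hk.intervalIntegrable hh
  ⟨hk_symm.1.const_inner q, hk_symm.2.const_inner q⟩

lemma integral_inner_symmIncr_nonpos [CompleteSpace E] (hk : Integrable k) {p h : ℝ} (hh : 0 ≤ h)
    (hp : ‖∫ x in Iic p, k x‖ = 1) (hsub : ‖∫ x in Iic (p - h), k x‖ ≤ 1)
    (hadd : ‖∫ x in Iic (p + h), k x‖ ≤ 1) :
    ∫ y in 0..h, ⟪∫ x in Iic p, k x, symmIncr k p y⟫ ≤ 0 := by
  set q := ∫ x in Iic p, k x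
  have le_one : ∀ v : E, ‖v‖ ≤ 1 → ⟪q, v⟫ ≤ 1 := fun v hv =>
    (real_inner_le_norm q v).trans (by rwa [hp, one_mul])
  have hqq : ⟪q, q⟫ = 1 := by rw [real_inner_self_eq_norm_sq, hp, one_pow]
  calc ∫ y in 0..h, ⟪q, symmIncr k p y⟫
      = ⟪q, ∫ y in 0..h, symmIncr k p y⟫ := by
        simp only [intervalIntegral.integral_of_le hh]
        exact integral_inner (intervalIntegrable_symmIncr hk.intervalIntegrable hh).1 q
    _ = ⟪q, ∫ x in Iic (p + h), k x⟫ - ⟪q, q⟫ - (⟪q, q⟫ - ⟪q, ∫ x in Iic (p - h), k x⟫) := by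
        rw [integral_symmIncr hk.intervalIntegrable hh,
          ← intervalIntegral.integral_Iic_sub_Iic hk.integrableOn hk.integrableOn,
          ← intervalIntegral.integral_Iic_sub_Iic hk.integrableOn hk.integrableOn]
        simp only [inner_sub_right, q]
    _ ≤ 0 := by linarith [le_one _ hsub, le_one _ hadd]

namespace IsCalibratedBy

variable {lam : ℝ} {J : Set ℝ} {f u : ℝ → E} {e p ε : ℝ}

lemma eventually_mul_symmIncr_le (h : IsCalibratedBy lam J f u k) (hJ : J.OrdConnected)
    (he : e ∈ J) (hp : J ∈ 𝓝 p) (hε : 0 < ε) :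
    ∀ᶠ y in 𝓝[>] 0, (1 - ε) * symmIncr (variationOnFromTo u J e) p y ≤
      ⟪∫ x in Iic p, k x, symmIncr u p y⟫ := by
  filter_upwards [eventually_sub_mem_and_add_mem hp, eventually_integral_norm_lt h.integrable p hε]
    with y ⟨hy, hsub, hadd⟩ hlt
  refine le_trans ?_
    (h.mul_eVariationOn_le_inner _ hsub _ hadd p ⟨by linarith, by linarith⟩)
  rw [symmIncr, variationOnFromTo_sub_variationOnFromTo
    h.boundedVariationOn.locallyBoundedVariationOn hJ he hsub hadd (by linarith)]
  gcongr

lemma eventually_symmIncr_nonpos (h : IsCalibratedBy lam J f u k) (hJ : J.OrdConnected)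
    (he : e ∈ J) (hp : J ∈ 𝓝 p) (hz : ‖∫ x in Iic p, k x‖ < 1) :
    ∀ᶠ y in 𝓝[>] 0, symmIncr (variationOnFromTo u J e) p y ≤ 0 := by
  set q := ∫ x in Iic p, k x
  have hε : 0 < (1 - ‖q‖) / 2 := by linarith
  filter_upwards [eventually_sub_mem_and_add_mem hp, h.eventually_mul_symmIncr_le hJ he hp hε]
    with y ⟨hy, hsub, hadd⟩ hle
  have norm_le : ‖symmIncr u p y‖ ≤ symmIncr (variationOnFromTo u J e) p y :=
    norm_sub_le_variationOnFromTo_sub h.boundedVariationOn.locallyBoundedVariationOn hJ he hsub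
      hadd (by linarith)
  have inner_le := (real_inner_le_norm q (symmIncr u p y)).trans
    (mul_le_mul_of_nonneg_left norm_le (norm_nonneg q))
  refine nonpos_of_mul_nonpos_right (a := (1 - ‖q‖) / 2) ?_ hε
  linarith

lemma eventually_mul_symmIncr_le_add_inner (h : IsCalibratedBy lam J f u k)
    (hJ : J.OrdConnected) (hf : BoundedVariationOn f J) (he : e ∈ J) (hp : J ∈ 𝓝 p)
    (hε : 0 < ε) :
    ∀ᶠ y in 𝓝[>] 0, (1 - ε) * symmIncr (variationOnFromTo u J e) p y ≤
      symmIncr (variationOnFromTo f J e) p y + lam * ⟪∫ x in Iic p, k x, symmIncr k p y⟫ := by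
  set q := ∫ x in Iic p, k x
  have hq : ‖q‖ ≤ 1 := h.norm_integral_le_one p (mem_of_mem_nhds hp)
  filter_upwards [eventually_sub_mem_and_add_mem hp, h.eventually_mul_symmIncr_le hJ he hp hε]
    with y ⟨hy, hsub, hadd⟩ hle
  have split : symmIncr u p y = symmIncr f p y + lam • symmIncr k p y := by
    simp only [symmIncr, smul_sub, ← h.sub_eq _ hsub, ← h.sub_eq _ hadd]
    abel
  have norm_le : ‖symmIncr f p y‖ ≤ symmIncr (variationOnFromTo f J e) p y :=
    norm_sub_le_variationOnFromTo_sub hf.locallyBoundedVariationOn hJ he hsub hadd (by linarith)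
  have inner_le : ⟪q, symmIncr f p y⟫ ≤ symmIncr (variationOnFromTo f J e) p y :=
    (real_inner_le_norm _ _).trans ((mul_le_of_le_one_left (norm_nonneg _) hq).trans norm_le)
  rw [split, inner_add_right, real_inner_smul_right] at hle
  linarith

variable [CompleteSpace E]

lemma eventually_integral_mul_symmIncr_le (h : IsCalibratedBy lam J f u k) (hlam : 0 ≤ lam)
    (hJ : J.OrdConnected) (hf : BoundedVariationOn f J) (he : e ∈ J) (hp : J ∈ 𝓝 p)
    (hε : ε ∈ Ioo (0 : ℝ) 1) :
    ∀ᶠ r in 𝓝[>] 0, ∫ y in 0..r, (1 - ε) * symmIncr (variationOnFromTo u J e) p y ≤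
      ∫ y in 0..r, symmIncr (variationOnFromTo f J e) p y := by
  have hu_int := eventually_intervalIntegrable_symmIncr hp hJ
    (variationOnFromTo.monotoneOn h.boundedVariationOn.locallyBoundedVariationOn he)
  have hf_int := eventually_intervalIntegrable_symmIncr hp hJ
    (variationOnFromTo.monotoneOn hf.locallyBoundedVariationOn he)
  have hu_mul_int := hu_int.mono fun r hr => hr.const_mul (1 - ε)
  rcases (h.norm_integral_le_one p (mem_of_mem_nhds hp)).lt_or_eq with hz | hz
  · refine eventually_integral_le_of_eventually_le hu_mul_int hf_int ?_
    filter_upwards [eventually_sub_mem_and_add_mem hp, h.eventually_symmIncr_nonpos hJ he hp hz]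
      with y ⟨hy, hsub, hadd⟩ hnonpos
    have hmono : 0 ≤ symmIncr (variationOnFromTo f J e) p y := sub_nonneg.2 <|
      variationOnFromTo.monotoneOn hf.locallyBoundedVariationOn he hsub hadd (by linarith)
    exact (mul_nonpos_of_nonneg_of_nonpos (sub_nonneg.2 hε.2.le) hnonpos).trans hmono
  · set q := ∫ x in Iic p, k x
    have hk_int : ∀ r : ℝ, 0 ≤ r →
        IntervalIntegrable (fun y => lam * ⟪q, symmIncr k p y⟫) volume 0 r := fun r hr =>
      (intervalIntegrable_inner_symmIncr h.integrable q p hr).const_mul lam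
    have hsum_int := (hf_int.and self_mem_nhdsWithin).mono fun r hr => hr.1.add (hk_int r hr.2.le)
    filter_upwards [eventually_sub_mem_and_add_mem hp, hf_int,
      eventually_integral_le_of_eventually_le hu_mul_int hsum_int
        (h.eventually_mul_symmIncr_le_add_inner hJ hf he hp hε.1)] with r ⟨hr, hsub, hadd⟩ hfr hle
    refine hle.trans ?_
    rw [intervalIntegral.integral_add hfr (hk_int r hr.le), intervalIntegral.integral_const_mul]
    exact add_le_of_nonpos_right <| mul_nonpos_of_nonneg_of_nonpos hlam <|
      integral_inner_symmIncr_nonpos h.integrable hr.le hz (h.norm_integral_le_one _ hsub)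
        (h.norm_integral_le_one _ hadd)

lemma toReal_eVariationOn_Icc_le (h : IsCalibratedBy lam J f u k) (hlam : 0 ≤ lam)
    (hJ_open : IsOpen J) (hJ : J.OrdConnected) (hf : BoundedVariationOn f J) {s t : ℝ}
    (hs : s ∈ J) (ht : t ∈ J) (hst : s < t) :
    (eVariationOn u (Icc s t)).toReal ≤ (eVariationOn f J).toReal := by
  obtain ⟨s', hs's, hs'⟩ := (hJ_open.eventually_mem hs).exists_lt
  obtain ⟨t', htt', ht'⟩ := (hJ_open.eventually_mem ht).exists_gt
  set P := variationOnFromTo u J s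
  set Q := variationOnFromTo f J s
  have hu_loc := h.boundedVariationOn.locallyBoundedVariationOn
  have hf_loc := hf.locallyBoundedVariationOn
  have hsub : Icc s' t' ⊆ J := hJ.out hs' ht'
  have hP : MonotoneOn P (Icc s' t') := (variationOnFromTo.monotoneOn hu_loc hs).mono hsub
  have hQ : MonotoneOn Q (Icc s' t') := (variationOnFromTo.monotoneOn hf_loc hs).mono hsub
  have scaled : ∀ ε ∈ Ioo (0 : ℝ) 1, (1 - ε) * P t - (1 - ε) * P s ≤ Q t' - Q s' := fun ε hε => by
    refine sub_le_sub_of_frequently_integral_symmIncr_le (P := fun x => (1 - ε) * P x)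
      (fun x hx y hy hxy => mul_le_mul_of_nonneg_left (hP hx hy hxy) (sub_nonneg.2 hε.2.le))
      hQ hs's hst htt' fun p hp => ?_
    have hpJ : J ∈ 𝓝 p := hJ_open.mem_nhds (hsub (Ioo_subset_Icc_self hp))
    simpa only [symmIncr, mul_sub] using
      (h.eventually_integral_mul_symmIncr_le hlam hJ hf hs hpJ hε).frequently
  calc (eVariationOn u (Icc s t)).toReal
      = P t - P s := (variationOnFromTo_sub_variationOnFromTo hu_loc hJ hs hs ht hst.le).symm
    _ ≤ Q t' - Q s' := by
        refine sub_nonneg.1 (nonneg_of_forall_nonneg_add_mul (d := P t - P s) fun ε hε => ?_)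
        linarith [scaled ε hε]
    _ = (eVariationOn f (Icc s' t')).toReal :=
        variationOnFromTo_sub_variationOnFromTo hf_loc hJ hs hs' ht' (by linarith)
    _ ≤ (eVariationOn f J).toReal := ENNReal.toReal_mono hf (eVariationOn.mono f hsub)

theorem eVariationOn_le (h : IsCalibratedBy lam J f u k) (hlam : 0 ≤ lam)
    (hJ_open : IsOpen J) (hJ : J.OrdConnected) : eVariationOn u J ≤ eVariationOn f J := by
  by_cases hf : BoundedVariationOn f J
  · refine le_of_forall_lt fun c hc => ?_
    obtain ⟨s, hs, t, ht, hst, hlt⟩ := eVariationOn.exists_lt_eVariationOn_inter_Icc hc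
    rw [inter_eq_self_of_subset_right (hJ.out hs ht)] at hlt
    refine hlt.trans_le ((ENNReal.toReal_le_toReal ?_ hf).1
      (h.toReal_eVariationOn_Icc_le hlam hJ_open hJ hf hs ht hst))
    exact h.boundedVariationOn.mono (hJ.out hs ht)
  · rw [not_ne_iff.1 hf]
    exact le_top

end IsCalibratedBy

end Comparison

theorem tv_minimizer_le_tv_datum_on_open_subintervals_general {E : Type*} [NormedAddCommGroup E]
    [InnerProductSpace ℝ E] [CompleteSpace E] {lam : ℝ} (hlam : 0 < lam) {I : Set ℝ}
    (hI : MeasurableSet I) (hI_fin : volume I ≠ ∞) {f u : ℝ → E}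
    (hf : MemLp f 2 (volume.restrict I)) (hu : IsTVMinimizer lam I f u) {J : Set ℝ} (hJI : J ⊆ I)
    (hJ_open : IsOpen J) (hJ : J.OrdConnected) : eVariationOn u J ≤ eVariationOn f J :=
  (hu.isCalibratedBy hlam hI hI_fin hf hJI hJ).eVariationOn_le hlam.le hJ_open hJ

section Euclidean

variable {n : ℕ} {lam a b : ℝ} {f u w : ℝ → EuclideanSpace ℝ (Fin n)} {S : Set ℝ}

lemma sqIntOn_iff_memLp_two (hw : Measurable w) :
    SqIntOn w S ↔ MemLp w 2 (volume.restrict S) :=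
  (memLp_two_iff_integrable_sq_norm hw.aestronglyMeasurable).symm

lemma IsMinimizer.isTVMinimizer (hu : IsMinimizer lam a b f u) :
    IsTVMinimizer lam (Ioo a b) f u where
  stronglyMeasurable := hu.1.stronglyMeasurable
  memLp := (sqIntOn_iff_memLp_two hu.1).1 hu.2.1
  energy_le w hw_meas hw :=
    hu.2.2 w hw_meas.measurable ((sqIntOn_iff_memLp_two hw_meas.measurable).2 hw)

end Euclidean

/-- the total variation of the ROF minimizer over any open
subinterval `J = Ioo c d` of `I` is at most that of the datum `f` over `J`. -/
theorem tv_minimizer_le_tv_datum_on_open_subintervals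
    {n : ℕ} (hn : 1 ≤ n) (a b : ℝ) (hab : a < b) (lam : ℝ) (hlam : 0 < lam)
    (f : ℝ → EuclideanSpace ℝ (Fin n)) (hf_meas : Measurable f)
    (hf_sq : SqIntOn f (Set.Ioo a b))
    (u : ℝ → EuclideanSpace ℝ (Fin n)) (hu : IsMinimizer lam a b f u)
    (c d : ℝ) (hJ : Set.Ioo c d ⊆ Set.Ioo a b) :
    eVariationOn u (Set.Ioo c d) ≤ eVariationOn f (Set.Ioo c d) :=
  tv_minimizer_le_tv_datum_on_open_subintervals_general hlam measurableSet_Ioo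
    measure_Ioo_lt_top.ne ((sqIntOn_iff_memLp_two hf_meas).1 hf_sq) hu.isTVMinimizer hJ isOpen_Ioo
    ordConnected_Ioo
end
end

section
/- Let u be a minimizer of the energy E, and let U ⊆ I be an open interval on which f has bounded variation (eVariationOn f U < ∞). Then there is a function ū equal to u almost everywhere on I such that for every closed interval [c,d] ⊆ U one has eVariationOn ū (Set.Icc c d) ≤ eVariationOn f (Set.Icc c d). -/
open MeasureTheory Set Filter
open scoped ENNReal

noncomputable section

/-!
Cut `(a, b)` into `N + 1` cells of equal length and replace `f` by its cell averages. Averaging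
over the cells does not increase the energy, so the minimizer becomes a step function minimizing a
discrete energy. In a discrete minimizer `v` with datum `F`, moving `v i` and `v (i + 1)` towards
each other by the same amount shortens their jump by at least as much as it lengthens the adjacent
ones, so optimality against this dipole forces `‖v (i + 1) - v i‖ ≤ ‖F (i + 1) - F i‖`. Hence the
oscillation of the discrete minimizer between two points is at most the variation of `f` over a
slightly larger interval.

Comparing two minimizers with their midpoint gives `‖u - v‖² ≤ 4 ‖f - g‖²` in `L²` for minimizers
`u`, `v` with data `f`, `g`, so the discrete minimizers converge to `u` as the mesh tends to `0`,
almost everywhere along a subsequence. At the continuity points of `f`, which form a set of full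
measure in `U`, the oscillation bound passes to the limit; on the exceptional null set the
values of `u` are then replaced by common points of closed balls.
-/

open scoped Topology

section Variation

theorem eVariationOn_le_of_edist_le_eVariationOn_Icc {α E F : Type*} [LinearOrder α]
    [PseudoEMetricSpace E] [PseudoEMetricSpace F] {f : α → E} {g : α → F} {s : Set α}
    (hs : s.OrdConnected)
    (h : ∀ x ∈ s, ∀ y ∈ s, x ≤ y → edist (g x) (g y) ≤ eVariationOn f (Icc x y)) :
    eVariationOn g s ≤ eVariationOn f s := by
  refine iSup_le fun ⟨n, p, hp, hps⟩ => ?_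
  calc ∑ i ∈ Finset.range n, edist (g (p (i + 1))) (g (p i))
      ≤ ∑ i ∈ Finset.range n, eVariationOn f (Icc (p i) (p (i + 1))) :=
        Finset.sum_le_sum fun i _ =>
          edist_comm (g (p i)) _ ▸ h _ (hps i) _ (hps (i + 1)) (hp i.le_succ)
    _ = eVariationOn f (Icc (p 0) (p n)) := eVariationOn.sum' f hp
    _ ≤ eVariationOn f s := eVariationOn.mono f (hs.out (hps 0) (hps n))

theorem two_mul_eVariationOn_midpoint_le {α E : Type*} [LinearOrder α] [SeminormedAddCommGroup E]
    [NormedSpace ℝ E] (u v : α → E) (s : Set α) :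
    2 * eVariationOn (fun x => midpoint ℝ (u x) (v x)) s ≤
      eVariationOn u s + eVariationOn v s := by
  have two_mul_edist_midpoint_le (p q p' q' : E) :
      2 * edist (midpoint ℝ p q) (midpoint ℝ p' q') ≤ edist p p' + edist q q' := by
    have h := dist_midpoint_midpoint_le p q p' q'
    simp only [edist_dist, ← ENNReal.ofReal_add dist_nonneg dist_nonneg]
    rw [← ENNReal.ofReal_ofNat 2, ← ENNReal.ofReal_mul zero_le_two]
    exact ENNReal.ofReal_le_ofReal (by linarith)
  rw [eVariationOn, ENNReal.mul_iSup]
  refine iSup_le fun ⟨n, p, hp, hps⟩ => ?_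
  rw [Finset.mul_sum]
  calc _ ≤ ∑ i ∈ Finset.range n,
          (edist (u (p (i + 1))) (u (p i)) + edist (v (p (i + 1))) (v (p i))) :=
        Finset.sum_le_sum fun i _ => two_mul_edist_midpoint_le _ _ _ _
    _ ≤ _ := by
        rw [Finset.sum_add_distrib]
        exact add_le_add (eVariationOn.sum_le hp hps) (eVariationOn.sum_le hp hps)

-- `V l` and `V r` are the values nearest to `t` on its two sides.
theorem exists_forall_abs_sub_add_abs_sub_le {ι : Type*} (V : ι → ℝ) {s : Finset ι}
    (hs : s.Nonempty) (t : ℝ) :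
    ∃ l r, ∀ i ∈ s, |V i - V l| + |V l - t| ≤ |V i - t| ∨ |V i - V r| + |V r - t| ≤ |V i - t| := by
  obtain ⟨l, -, hl⟩ := s.exists_min_image (|V · - t|) hs
  by_cases! hsep : ∀ i ∈ s, |V i - V l| + |V l - t| ≤ |V i - t|
  · exact ⟨l, l, fun i hi => .inl (hsep i hi)⟩
  let opposite := s.filter fun i => |V i - t| < |V i - V l| + |V l - t|
  obtain ⟨r, hr, hrmin⟩ :=
    opposite.exists_min_image (|V · - t|) (Finset.filter_nonempty_iff.2 hsep)
  refine ⟨l, r, fun i hi => or_iff_not_imp_left.2 fun hil => ?_⟩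
  have hri := hrmin i (Finset.mem_filter.2 ⟨hi, not_le.1 hil⟩)
  obtain ⟨hrs, hrl⟩ := Finset.mem_filter.1 hr
  have hlr := hl r hrs
  grind

theorem exists_forall_mem_finset_dist_le_abs_sub {ι E : Type*} [SeminormedAddCommGroup E]
    [NormedSpace ℝ E] {V : ι → ℝ} {φ : ι → E} (h : ∀ i j, dist (φ i) (φ j) ≤ |V i - V j|) (t : ℝ)
    (s : Finset ι) : ∃ e, ∀ i ∈ s, dist (φ i) e ≤ |V i - t| := by
  obtain rfl | hs := s.eq_empty_or_nonempty
  · exact ⟨0, by simp⟩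
  obtain ⟨l, r, hlr⟩ := exists_forall_abs_sub_add_abs_sub_le V hs t
  obtain ⟨e, hle, her⟩ := exists_dist_le_le (abs_nonneg (V l - t)) (abs_nonneg (V r - t))
    ((h l r).trans ((abs_sub_le _ t _).trans (by rw [abs_sub_comm t, add_comm])))
  rw [dist_comm] at her
  have dist_le {i k : ι} (hk : dist (φ k) e ≤ |V k - t|)
      (hi : |V i - V k| + |V k - t| ≤ |V i - t|) : dist (φ i) e ≤ |V i - t| :=
    ((dist_triangle _ _ _).trans (add_le_add (h i k) hk)).trans hi
  exact ⟨e, fun i hi => (hlr i hi).elim (dist_le hle) (dist_le her)⟩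

theorem exists_forall_dist_le_abs_sub {ι E : Type*} [SeminormedAddCommGroup E] [NormedSpace ℝ E]
    [ProperSpace E] {V : ι → ℝ} {φ : ι → E} (h : ∀ i j, dist (φ i) (φ j) ≤ |V i - V j|) (t : ℝ) :
    ∃ e, ∀ i, dist (φ i) e ≤ |V i - t| := by
  classical
  obtain _ | ⟨⟨i₀⟩⟩ := isEmpty_or_nonempty ι
  · exact ⟨0, isEmptyElim⟩
  obtain ⟨e, -, he⟩ := (isCompact_closedBall (φ i₀) |V i₀ - t|).inter_iInter_nonempty
    (fun i => Metric.closedBall (φ i) |V i - t|) (fun _ => Metric.isClosed_closedBall) fun s => by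
      obtain ⟨e, he⟩ := exists_forall_mem_finset_dist_le_abs_sub h t (insert i₀ s)
      simp only [Finset.mem_insert, forall_eq_or_imp, dist_comm _ e] at he
      exact ⟨e, he.1, mem_iInter₂.2 he.2⟩
  exact ⟨e, fun i => dist_comm e _ ▸ mem_iInter.1 he i⟩

theorem edist_le_eVariationOn_Icc_iff {α E F : Type*} [LinearOrder α] [PseudoMetricSpace E]
    [PseudoEMetricSpace F] {f : α → F} {s : Set α} (hs : s.OrdConnected)
    (hf : LocallyBoundedVariationOn f s) {x y : α} (hx : x ∈ s) (hy : y ∈ s) (hxy : x ≤ y)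
    {p q : E} :
    edist p q ≤ eVariationOn f (Icc x y) ↔ dist p q ≤ variationOnFromTo f s x y := by
  have hfin := hf x y hx hy
  rw [variationOnFromTo.eq_of_le f s hxy]
  rw [inter_eq_self_of_subset_right (hs.out hx hy)] at hfin ⊢
  rw [edist_dist, ENNReal.ofReal_le_iff_le_toReal hfin]

theorem exists_eqOn_forall_dist_le_abs_variationOnFromTo {α E F : Type*} [LinearOrder α]
    [SeminormedAddCommGroup E] [NormedSpace ℝ E] [ProperSpace E] [PseudoEMetricSpace F]
    {u : α → E} {f : α → F} {s G : Set α} (hs : s.OrdConnected)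
    (hf : LocallyBoundedVariationOn f s) (hGs : G ⊆ s)
    (h : ∀ x ∈ G, ∀ y ∈ G, x ≤ y → edist (u x) (u y) ≤ eVariationOn f (Icc x y)) :
    ∃ v : α → E, EqOn v u (s \ G)ᶜ ∧
      ∀ x ∈ G, ∀ y ∈ s, dist (u x) (v y) ≤ |variationOnFromTo f s x y| := by
  classical
  have hu (x y : G) : dist (u x) (u y) ≤ |variationOnFromTo f s x y| := by
    wlog hxy : (x : α) ≤ y generalizing x y
    · rw [dist_comm, variationOnFromTo.eq_neg_swap, abs_neg]
      exact this y x (le_of_not_ge hxy)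
    exact ((edist_le_eVariationOn_Icc_iff hs hf (hGs x.2) (hGs y.2) hxy).1
      (h x x.2 y y.2 hxy)).trans (le_abs_self _)
  have hsub {x y z : α} (hx : x ∈ s) (hy : y ∈ s) (hz : z ∈ s) :
      variationOnFromTo f s x y = variationOnFromTo f s x z - variationOnFromTo f s y z :=
    eq_sub_of_add_eq (variationOnFromTo.add hf hx hy hz)
  have hext (y : α) (hy : y ∈ s) : ∃ e, ∀ x : G, dist (u x) e ≤ |variationOnFromTo f s x y| := by
    obtain ⟨e, he⟩ := exists_forall_dist_le_abs_sub
      (fun x x' : G => (hu x x').trans_eq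
        (congrArg _ (hsub (hGs x.2) (hGs x'.2) hy))) 0
    exact ⟨e, by simpa only [sub_zero] using he⟩
  choose! e he using hext
  refine ⟨fun y => if y ∈ s \ G then e y else u y, fun y hy => if_neg hy, fun x hx y hy => ?_⟩
  by_cases hyG : y ∈ G
  · simpa [hyG] using hu ⟨x, hx⟩ ⟨y, hyG⟩
  · simpa [hy, hyG] using he y hy ⟨x, hx⟩

theorem exists_ae_eq_forall_eVariationOn_le {E F : Type*} [SeminormedAddCommGroup E]
    [NormedSpace ℝ E] [ProperSpace E] [PseudoEMetricSpace F] {u : ℝ → E} {f : ℝ → F}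
    {s G : Set ℝ} (hs : s.OrdConnected) (hf : LocallyBoundedVariationOn f s) (hGs : G ⊆ s)
    (hG : ∀ᵐ x, x ∈ s → x ∈ G)
    (h : ∀ x ∈ G, ∀ y ∈ G, x ≤ y → edist (u x) (u y) ≤ eVariationOn f (Icc x y)) :
    ∃ v : ℝ → E, v =ᵐ[volume] u ∧
      ∀ c d, Icc c d ⊆ s → eVariationOn v (Icc c d) ≤ eVariationOn f (Icc c d) := by
  obtain ⟨v, hvu, hv⟩ := exists_eqOn_forall_dist_le_abs_variationOnFromTo hs hf hGs h
  refine ⟨v, ?_, fun c d hcd => ?_⟩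
  · filter_upwards [hG] with x hx
    exact hvu fun hxs => hxs.2 (hx hxs.1)
  refine eVariationOn_le_of_edist_le_eVariationOn_Icc ordConnected_Icc fun x hx y hy hxy => ?_
  obtain rfl | hxy := hxy.eq_or_lt
  · simp
  replace hx := hcd hx
  replace hy := hcd hy
  obtain ⟨z, hzG, hxz, hzy⟩ := (Measure.dense_of_ae hG).exists_between hxy
  replace hzG := hzG (hs.out hx hy ⟨hxz.le, hzy.le⟩)
  refine (edist_le_eVariationOn_Icc_iff hs hf hx hy hxy.le).2 ?_
  calc dist (v x) (v y) ≤ dist (u z) (v x) + dist (u z) (v y) := dist_triangle_left _ _ _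
    _ ≤ |variationOnFromTo f s z x| + |variationOnFromTo f s z y| :=
        add_le_add (hv z hzG x hx) (hv z hzG y hy)
    _ = variationOnFromTo f s x z + variationOnFromTo f s z y := by
        rw [variationOnFromTo.eq_neg_swap, abs_neg,
          abs_of_nonneg (variationOnFromTo.nonneg_of_le f s hxz.le),
          abs_of_nonneg (variationOnFromTo.nonneg_of_le f s hzy.le)]
    _ = variationOnFromTo f s x y := variationOnFromTo.add hf hx (hGs hzG) hy

theorem tendsto_eVariationOn_Icc_sub_add {E : Type*} [PseudoEMetricSpace E] {f : ℝ → E}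
    {s : Set ℝ} (hs : IsOpen s) (hs' : s.OrdConnected) (hf : BoundedVariationOn f s) {x y : ℝ}
    (hx : x ∈ s) (hy : y ∈ s) (hxy : x ≤ y) (hfx : ContinuousAt f x) (hfy : ContinuousAt f y) :
    Tendsto (fun h => eVariationOn f (Icc (x - h) (y + h))) (𝓝[>] 0)
      (𝓝 (eVariationOn f (Icc x y))) := by
  have hsub : Tendsto (fun h => x - h) (𝓝[>] 0) (𝓝[s] x) := by
    rw [hs.nhdsWithin_eq hx]
    exact (Continuous.tendsto' (by fun_prop) 0 x (sub_zero x)).mono_left nhdsWithin_le_nhds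
  have hadd : Tendsto (fun h => y + h) (𝓝[>] 0) (𝓝[s] y) := by
    rw [hs.nhdsWithin_eq hy]
    exact (Continuous.tendsto' (by fun_prop) 0 y (add_zero y)).mono_left nhdsWithin_le_nhds
  have hleft := (hf.tendsto_eVariationOn_Icc_zero_left hfx.continuousWithinAt).comp hsub
  have hright := (hf.tendsto_eVariationOn_Icc_zero_right y hfy.continuousWithinAt).comp hadd
  have hsum := (hleft.add_const (eVariationOn f (Icc x y))).add hright
  rw [zero_add, add_zero] at hsum
  refine hsum.congr' ?_
  filter_upwards [self_mem_nhdsWithin, hsub self_mem_nhdsWithin, hadd self_mem_nhdsWithin]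
    with h (hh : 0 < h) (hxh : x - h ∈ s) (hyh : y + h ∈ s)
  simp only [Function.comp_apply, inter_eq_self_of_subset_right (hs'.out hxh hx),
    inter_eq_self_of_subset_right (hs'.out hy hyh)]
  have hIcc := @eVariationOn.Icc_add_Icc ℝ _ E _ f univ
  simp only [univ_inter, mem_univ, forall_true_left] at hIcc
  rw [hIcc (by linarith) hxy, hIcc (by linarith) (by linarith)]

end Variation

section Discrete

variable {E : Type*} [NormedAddCommGroup E]

/-- Total variation of the finite sequence `v 0, …, v N`. -/
def discreteVariation (N : ℕ) (v : ℕ → E) : ℝ :=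
  ∑ i ∈ Finset.range N, ‖v (i + 1) - v i‖

/-- The discrete Rudin–Osher–Fatemi energy of `v 0, …, v N` with datum `F 0, …, F N` and fidelity
weight `κ`. -/
def discreteEnergy (κ : ℝ) (N : ℕ) (F v : ℕ → E) : ℝ :=
  discreteVariation N v + κ * ∑ i ∈ Finset.range (N + 1), ‖v i - F i‖ ^ 2

theorem discreteVariation_nonneg (N : ℕ) (v : ℕ → E) : 0 ≤ discreteVariation N v :=
  Finset.sum_nonneg fun _ _ => norm_nonneg _

theorem exists_forall_discreteEnergy_le [ProperSpace E] {κ : ℝ} (hκ : 0 < κ) (N : ℕ)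
    (F : ℕ → E) : ∃ v, ∀ w, discreteEnergy κ N F v ≤ discreteEnergy κ N F w := by
  set R := √(discreteEnergy κ N F F / κ)
  have norm_sub_le {w : ℕ → E} (hw : discreteEnergy κ N F w ≤ discreteEnergy κ N F F) {i : ℕ}
      (hi : i ≤ N) : ‖w i - F i‖ ≤ R := by
    refine Real.le_sqrt_of_sq_le ((le_div_iff₀' hκ).2 (le_trans ?_ hw))
    have hsingle := Finset.single_le_sum (f := fun i => ‖w i - F i‖ ^ 2)
      (fun _ _ => sq_nonneg _) (Finset.mem_range_succ_iff.2 hi)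
    exact (mul_le_mul_of_nonneg_left hsingle hκ.le).trans
      (le_add_of_nonneg_left (discreteVariation_nonneg N w))
  have hF : F ∈ univ.pi fun i => Metric.closedBall (F i) R :=
    fun i _ => Metric.mem_closedBall_self (Real.sqrt_nonneg _)
  have hcont : Continuous (discreteEnergy κ N F) := by
    unfold discreteEnergy discreteVariation
    fun_prop
  obtain ⟨v, -, hv⟩ := (isCompact_univ_pi fun i => isCompact_closedBall (F i) R).exists_isMinOn
    ⟨F, hF⟩ hcont.continuousOn
  refine ⟨v, fun w => ?_⟩
  obtain hw | hw := le_total (discreteEnergy κ N F F) (discreteEnergy κ N F w)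
  · exact (hv hF).trans hw
  let w' (i : ℕ) : E := if i ≤ N then w i else F i
  have hw' : discreteEnergy κ N F w' = discreteEnergy κ N F w := by
    unfold discreteEnergy discreteVariation
    congr 1
    · exact Finset.sum_congr rfl fun i hi => by grind
    · congr 1
      exact Finset.sum_congr rfl fun i hi => by grind
  rw [← hw']
  refine hv fun i _ => ?_
  by_cases hi : i ≤ N
  · simpa [w', hi, dist_eq_norm] using norm_sub_le hw hi
  · simpa [w', hi] using hF i trivial

/-- The perturbation that pushes two consecutive entries, `i` and `i + 1`, in the opposite
directions `e` and `-e`. Added with a small multiple of `e = v (i + 1) - v i`, it draws `v i` and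
`v (i + 1)` together without moving their midpoint. -/
def dipole (i : ℕ) (e : E) : ℕ → E :=
  Pi.single i e - Pi.single (i + 1) e

theorem dipole_self (i : ℕ) (e : E) : dipole i e i = e := by
  simp [dipole]

theorem dipole_succ (i : ℕ) (e : E) : dipole i e (i + 1) = -e := by
  simp [dipole]

theorem dipole_of_ne {i j : ℕ} (hj : j ≠ i) (hj' : j ≠ i + 1) (e : E) : dipole i e j = 0 := by
  simp [dipole, hj, hj']

theorem norm_dipole_succ_sub_le {i j : ℕ} (hj : j ≠ i) (e : E) :
    ‖dipole i e (j + 1) - dipole i e j‖ ≤ dipole i ‖e‖ (j + 1) - dipole i ‖e‖ j := by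
  simp only [dipole, Pi.sub_apply, Pi.single_apply]
  split_ifs <;> first | omega | simp

-- The step from `v i` to `v (i + 1)` gets shorter by exactly as much as its two neighbours can get
-- longer; the telescoping sum of `dipole i ‖e‖` keeps this account.
theorem discreteVariation_add_smul_dipole_le [NormedSpace ℝ E] {N i : ℕ} (hi : i < N)
    (v : ℕ → E) {t : ℝ} (ht : 0 ≤ t) (ht' : t ≤ 1 / 2) :
    discreteVariation N (v + t • dipole i (v (i + 1) - v i)) ≤ discreteVariation N v := by
  set e := v (i + 1) - v i with he
  have hstep (j : ℕ) : ‖(v + t • dipole i e) (j + 1) - (v + t • dipole i e) j‖ ≤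
      ‖v (j + 1) - v j‖ + t * (dipole i ‖e‖ (j + 1) - dipole i ‖e‖ j) := by
    simp only [Pi.add_apply, Pi.smul_apply]
    obtain rfl | hji := eq_or_ne j i
    · rw [dipole_self, dipole_succ, dipole_self, dipole_succ, ← he,
        show v (j + 1) + t • -e - (v j + t • e) = (1 - 2 * t) • e by rw [he]; module, norm_smul,
        Real.norm_of_nonneg (by linarith)]
      linarith
    · calc _ = ‖(v (j + 1) - v j) + t • (dipole i e (j + 1) - dipole i e j)‖ := by
            congr 1
            module
        _ ≤ ‖v (j + 1) - v j‖ + t * ‖dipole i e (j + 1) - dipole i e j‖ := by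
            simpa only [norm_smul, Real.norm_of_nonneg ht] using norm_add_le (v (j + 1) - v j)
              (t • (dipole i e (j + 1) - dipole i e j))
        _ ≤ _ := by grw [norm_dipole_succ_sub_le hji]
  have dipole_first_nonneg : 0 ≤ dipole i ‖e‖ 0 := by
    simp only [dipole, Pi.sub_apply, Pi.single_apply]
    split_ifs <;> simp_all
  have dipole_last_nonpos : dipole i ‖e‖ N ≤ 0 := by
    simp only [dipole, Pi.sub_apply, Pi.single_apply]
    split_ifs <;> simp_all
  calc discreteVariation N (v + t • dipole i e)
      ≤ ∑ j ∈ Finset.range N,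
          (‖v (j + 1) - v j‖ + t * (dipole i ‖e‖ (j + 1) - dipole i ‖e‖ j)) :=
        Finset.sum_le_sum fun j _ => hstep j
    _ = discreteVariation N v + t * (dipole i ‖e‖ N - dipole i ‖e‖ 0) := by
        rw [Finset.sum_add_distrib, ← Finset.mul_sum, Finset.sum_range_sub, discreteVariation]
    _ ≤ discreteVariation N v := by nlinarith

variable [InnerProductSpace ℝ E]

theorem sum_norm_add_smul_dipole_sub_sq {N i : ℕ} (hi : i < N) (F v : ℕ → E) (e : E) (t : ℝ) :
    ∑ j ∈ Finset.range (N + 1), ‖(v + t • dipole i e) j - F j‖ ^ 2 =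
      ∑ j ∈ Finset.range (N + 1), ‖v j - F j‖ ^ 2 +
        2 * t * (inner ℝ ((F (i + 1) - F i) - (v (i + 1) - v i)) e + t * ‖e‖ ^ 2) := by
  rw [← sub_eq_iff_eq_add', ← Finset.sum_sub_distrib, Finset.sum_eq_add_of_mem i (i + 1)
    (Finset.mem_range.2 (by omega)) (Finset.mem_range.2 (by omega)) i.lt_succ_self.ne]
  · simp only [Pi.add_apply, Pi.smul_apply, dipole_self, dipole_succ]
    rw [show v i + t • e - F i = (v i - F i) + t • e by module,
      show v (i + 1) + t • -e - F (i + 1) = (v (i + 1) - F (i + 1)) - t • e by module,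
      norm_add_sq_real, norm_sub_sq_real _ (t • e), norm_smul, mul_pow, Real.norm_eq_abs, sq_abs]
    simp only [inner_sub_left, inner_smul_right]
    ring
  · rintro j - ⟨hj, hj'⟩
    simp [dipole_of_ne hj hj']

theorem norm_sub_le_of_forall_discreteEnergy_le {κ : ℝ} (hκ : 0 < κ) {N i : ℕ} (hi : i < N)
    {F v : ℕ → E} (hv : ∀ w, discreteEnergy κ N F v ≤ discreteEnergy κ N F w) :
    ‖v (i + 1) - v i‖ ≤ ‖F (i + 1) - F i‖ := by
  set e := v (i + 1) - v i
  have slope_nonneg {t : ℝ} (ht : t ∈ Ioc 0 (1 / 2 : ℝ)) :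
      0 ≤ inner ℝ (F (i + 1) - F i - e) e + t * ‖e‖ ^ 2 := by
    have h := (hv (v + t • dipole i e)).trans
      (add_le_add_left (discreteVariation_add_smul_dipole_le hi v ht.1.le ht.2) _)
    rw [discreteEnergy, add_le_add_iff_left, mul_le_mul_iff_right₀ hκ,
      sum_norm_add_smul_dipole_sub_sq hi, le_add_iff_nonneg_right] at h
    exact nonneg_of_mul_nonneg_right h (by linarith [ht.1])
  have hinner : 0 ≤ inner ℝ (F (i + 1) - F i - e) e := by
    have hlim : Tendsto (fun t : ℝ => inner ℝ (F (i + 1) - F i - e) e + t * ‖e‖ ^ 2) (𝓝[>] 0)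
        (𝓝 (inner ℝ (F (i + 1) - F i - e) e)) :=
      (Continuous.tendsto' (by fun_prop) 0 _ (by simp)).mono_left nhdsWithin_le_nhds
    refine ge_of_tendsto hlim ?_
    filter_upwards [Ioc_mem_nhdsGT (by norm_num : (0 : ℝ) < 1 / 2)] with t ht
    exact slope_nonneg ht
  rw [inner_sub_left, real_inner_self_eq_norm_sq, sub_nonneg, sq] at hinner
  obtain he0 | he0 := (norm_nonneg e).eq_or_lt
  · exact he0 ▸ norm_nonneg _
  · exact le_of_mul_le_mul_right (hinner.trans (real_inner_le_norm _ _)) he0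

end Discrete

section Grid

theorem integral_norm_const_sub_sq {α E : Type*} [MeasurableSpace α] {μ : Measure α}
    [IsFiniteMeasure μ] [NormedAddCommGroup E] [InnerProductSpace ℝ E] [CompleteSpace E]
    {f : α → E} (hf : MemLp f 2 μ) (e : E) :
    ∫ x, ‖e - f x‖ ^ 2 ∂μ =
      μ.real univ * ‖e - ⨍ y, f y ∂μ‖ ^ 2 + ∫ x, ‖(⨍ y, f y ∂μ) - f x‖ ^ 2 ∂μ := by
  set m := ⨍ y, f y ∂μ
  have hsub : MemLp (fun x => m - f x) 2 μ := (memLp_const m).sub hf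
  have hcross : ∫ x, inner ℝ (e - m) (m - f x) ∂μ = 0 := by
    rw [integral_inner (hsub.integrable one_le_two)]
    simp only [← neg_sub (f _) m, integral_neg, m, integral_sub_average, neg_zero, inner_zero_right]
  have hexpand (x : α) :
      ‖e - f x‖ ^ 2 = ‖e - m‖ ^ 2 + 2 * inner ℝ (e - m) (m - f x) + ‖m - f x‖ ^ 2 := by
    rw [← sub_add_sub_cancel e m, norm_add_sq_real]
  have hint := ((hsub.integrable one_le_two).const_inner (𝕜 := ℝ) (e - m)).const_mul 2
  have hint' : Integrable (fun x => ‖e - m‖ ^ 2 + 2 * inner ℝ (e - m) (m - f x)) μ :=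
    (integrable_const _).add hint
  simp only [hexpand]
  rw [integral_add hint' (hsub.integrable_norm_pow two_ne_zero),
    integral_add (integrable_const _) hint, integral_const_mul, hcross, integral_const, smul_eq_mul,
    mul_zero, add_zero]

theorem sum_edist_average_le {ι α E : Type*} [MeasurableSpace α] {μ : Measure α}
    [IsFiniteMeasure μ] [NeZero μ] [NormedAddCommGroup E] [NormedSpace ℝ E] {s : Finset ι}
    {f g : ι → α → E} (hf : ∀ i ∈ s, Integrable (f i) μ) (hg : ∀ i ∈ s, Integrable (g i) μ)
    {C : ℝ≥0∞} (h : ∀ᵐ x ∂μ, ∑ i ∈ s, edist (f i x) (g i x) ≤ C) :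
    ∑ i ∈ s, edist (⨍ x, f i x ∂μ) (⨍ x, g i x ∂μ) ≤ C := by
  calc ∑ i ∈ s, edist (⨍ x, f i x ∂μ) (⨍ x, g i x ∂μ)
      ≤ ∑ i ∈ s, ⨍⁻ x, edist (f i x) (g i x) ∂μ := Finset.sum_le_sum fun i hi => by
        simp only [average, laverage, edist_eq_enorm_sub]
        rw [← integral_sub (hf i hi).to_average (hg i hi).to_average]
        exact enorm_integral_le_lintegral_enorm _
    _ = ⨍⁻ x, ∑ i ∈ s, edist (f i x) (g i x) ∂μ := by
        refine (lintegral_finsetSum' s fun i hi => ?_).symm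
        simp only [edist_eq_enorm_sub]
        exact ((hf i hi).to_average.sub (hg i hi).to_average).aestronglyMeasurable.enorm
    _ ≤ ⨍⁻ _, C ∂μ := lintegral_mono_ae (Measure.ae_smul_measure h _)
    _ = C := laverage_const μ C

/-- The index of the cell of the grid `a, a + h, a + 2 * h, …` that contains `x`. -/
def gridIndex (a h x : ℝ) : ℕ :=
  ⌊(x - a) / h⌋₊

/-- The `i`-th cell of the grid `a, a + h, a + 2 * h, …`, without its endpoints. -/
def gridCell (a h : ℝ) (i : ℕ) : Set ℝ :=
  Ioo (a + i * h) (a + (i + 1) * h)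

/-- The cell length that divides `Ioo a b` into `N + 1` cells. -/
def gridMesh (a b : ℝ) (N : ℕ) : ℝ :=
  (b - a) / (N + 1)

/-- The step function with value `v i` on the `i`-th cell of the grid. -/
def gridStep {E : Type*} (a h : ℝ) (v : ℕ → E) (x : ℝ) : E :=
  v (gridIndex a h x)

/-- The sequence of the mean values of `f` on the cells of the grid. -/
def gridAverage {E : Type*} [NormedAddCommGroup E] [NormedSpace ℝ E] (a h : ℝ) (f : ℝ → E)
    (i : ℕ) : E :=
  ⨍ x in gridCell a h i, f x

theorem gridMesh_pos {a b : ℝ} (hab : a < b) (N : ℕ) : 0 < gridMesh a b N :=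
  div_pos (sub_pos.2 hab) N.cast_add_one_pos

theorem add_succ_mul_gridMesh (a b : ℝ) (N : ℕ) : a + (N + 1 : ℕ) * gridMesh a b N = b := by
  rw [gridMesh, Nat.cast_add_one, mul_div_cancel₀ _ N.cast_add_one_ne_zero, add_sub_cancel]

theorem tendsto_gridMesh {a b : ℝ} (hab : a < b) : Tendsto (gridMesh a b) atTop (𝓝[>] 0) := by
  refine tendsto_nhdsWithin_iff.2 ⟨?_, .of_forall (gridMesh_pos hab)⟩
  unfold gridMesh
  exact_mod_cast (tendsto_const_div_atTop_nhds_zero_nat (b - a)).comp (tendsto_add_atTop_nat 1)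

variable {a h : ℝ}

theorem gridIndex_eq (hh : 0 < h) {i : ℕ} {x : ℝ} (hx : x ∈ Ico (a + i * h) (a + (i + 1) * h)) :
    gridIndex a h x = i := by
  have hi : (i : ℝ) ≤ (x - a) / h := (le_div_iff₀ hh).2 (by linarith [hx.1])
  refine (Nat.floor_eq_iff (i.cast_nonneg.trans hi)).2 ⟨hi, (div_lt_iff₀ hh).2 ?_⟩
  linarith [hx.2]

theorem monotone_gridIndex (hh : 0 < h) : Monotone (gridIndex a h) :=
  fun _ _ hxy => Nat.floor_mono (by gcongr)

theorem measurable_gridIndex (a h : ℝ) : Measurable (gridIndex a h) :=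
  Nat.measurable_floor.comp ((measurable_id.sub_const a).div_const h)

theorem mem_Ico_gridIndex (hh : 0 < h) {x : ℝ} (hx : a ≤ x) :
    x ∈ Ico (a + gridIndex a h x * h) (a + (gridIndex a h x + 1) * h) := by
  have hle := (le_div_iff₀ hh).1 (Nat.floor_le (div_nonneg (sub_nonneg.2 hx) hh.le))
  have hlt := (div_lt_iff₀ hh).1 (Nat.lt_floor_add_one ((x - a) / h))
  exact ⟨by simpa [gridIndex] using le_sub_iff_add_le'.1 hle,
    by simpa [gridIndex] using sub_lt_iff_lt_add'.1 hlt⟩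

theorem gridIndex_lt (hh : 0 < h) {N : ℕ} {x : ℝ} (hx : a ≤ x) (hxN : x < a + N * h) :
    gridIndex a h x < N := by
  have := (mem_Ico_gridIndex hh hx).1.trans_lt hxN
  exact_mod_cast lt_of_mul_lt_mul_right (lt_of_add_lt_add_left this) hh.le

theorem gridStep_of_mem_gridCell {E : Type*} (hh : 0 < h) {i : ℕ} {x : ℝ}
    (hx : x ∈ gridCell a h i) (v : ℕ → E) : gridStep a h v x = v i := by
  rw [gridStep, gridIndex_eq hh (Ioo_subset_Ico_self hx)]

theorem stronglyMeasurable_gridStep {E : Type*} [TopologicalSpace E] (a h : ℝ) (v : ℕ → E) :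
    StronglyMeasurable (gridStep a h v) :=
  (StronglyMeasurable.of_discrete (f := v)).comp_measurable (measurable_gridIndex a h)

theorem gridCell_subset (hh : 0 < h) {i N : ℕ} (hi : i < N) :
    gridCell a h i ⊆ Ioo a (a + N * h) := by
  have : ((i + 1 : ℕ) : ℝ) ≤ N := Nat.cast_le.2 hi
  push_cast at this
  exact Ioo_subset_Ioo (le_add_of_nonneg_right (by positivity)) (by gcongr)

theorem volume_real_gridCell (hh : 0 < h) (i : ℕ) : volume.real (gridCell a h i) = h := by
  rw [gridCell, Real.volume_real_Ioo_of_le (by nlinarith)]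
  ring

theorem setIntegral_eq_sum_gridCell {E : Type*} [NormedAddCommGroup E] [NormedSpace ℝ E]
    (hh : 0 < h) {N : ℕ} {f : ℝ → E} (hf : IntegrableOn f (Ioo a (a + N * h))) :
    ∫ x in Ioo a (a + N * h), f x = ∑ i ∈ Finset.range N, ∫ x in gridCell a h i, f x := by
  let p (i : ℕ) : ℝ := a + i * h
  have hp (i : ℕ) : p i ≤ p (i + 1) := by simp only [p]; gcongr; simp
  have hcell (i : ℕ) : Ioo (p i) (p (i + 1)) = gridCell a h i := by
    simp only [p, gridCell, Nat.cast_add_one]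
  have hsum := intervalIntegral.sum_integral_adjacent_intervals (f := f) (μ := volume) (a := p)
    (n := N) fun i hi => (intervalIntegrable_iff_integrableOn_Ioo_of_le (hp i)).2
      (hcell i ▸ hf.mono_set (gridCell_subset hh hi))
  have hp0N : p 0 ≤ p N := monotone_nat_of_le_succ hp N.zero_le
  simp only [intervalIntegral.integral_of_le (hp _), intervalIntegral.integral_of_le hp0N,
    integral_Ioc_eq_integral_Ioo, hcell] at hsum
  simpa [p] using hsum.symm

variable {E : Type*} [NormedAddCommGroup E]

theorem memLp_gridStep (hh : 0 < h) (N : ℕ) (v : ℕ → E) (p : ℝ≥0∞) :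
    MemLp (gridStep a h v) p (volume.restrict (Ioo a (a + N * h))) := by
  refine MemLp.of_bound (stronglyMeasurable_gridStep a h v).aestronglyMeasurable
    (∑ i ∈ Finset.range N, ‖v i‖) ?_
  filter_upwards [ae_restrict_mem measurableSet_Ioo] with x hx
  exact Finset.single_le_sum (f := fun i => ‖v i‖) (fun _ _ => norm_nonneg _)
    (Finset.mem_range.2 (gridIndex_lt hh hx.1.le hx.2))

theorem eVariationOn_gridStep_le (hh : 0 < h) (N : ℕ) (v : ℕ → E) :
    eVariationOn (gridStep a h v) (Ioo a (a + (N + 1 : ℕ) * h)) ≤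
      ENNReal.ofReal (discreteVariation N v) := by
  calc eVariationOn (v ∘ gridIndex a h) (Ioo a (a + (N + 1 : ℕ) * h))
      ≤ eVariationOn v (id '' Iic N) := by
        refine eVariationOn.comp_le_of_monotoneOn v _ ((monotone_gridIndex hh).monotoneOn _) ?_
        rw [image_id]
        exact fun x hx => Nat.lt_succ_iff.1 (gridIndex_lt hh hx.1.le hx.2)
    _ = ENNReal.ofReal (discreteVariation N v) := by
        rw [eVariationOn.image_range_of_monotone v monotone_id, discreteVariation,
          ENNReal.ofReal_sum_of_nonneg fun _ _ => norm_nonneg _]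
        exact Finset.sum_congr rfl fun i _ => by
          rw [id, id, edist_comm, edist_dist, dist_eq_norm]

theorem measurePreserving_restrict_gridCell (a h : ℝ) (i : ℕ) :
    MeasurePreserving (fun t => a + i * h + t) (volume.restrict (Ioo 0 h))
      (volume.restrict (gridCell a h i)) := by
  have hpre : (fun t => a + i * h + t) ⁻¹' gridCell a h i = Ioo 0 h := by
    rw [gridCell, preimage_const_add_Ioo]
    congr 1 <;> ring
  exact hpre ▸ (measurePreserving_add_left volume (a + i * h)).restrict_preimage measurableSet_Ioo

theorem gridAverage_eq_setAverage_Ioo_zero [NormedSpace ℝ E] (hh : 0 < h) (f : ℝ → E) (i : ℕ) :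
    gridAverage a h f i = ⨍ t in Ioo 0 h, f (a + i * h + t) := by
  rw [gridAverage, setAverage_eq, setAverage_eq, volume_real_gridCell hh,
    Real.volume_real_Ioo_of_le hh.le, sub_zero,
    (measurePreserving_restrict_gridCell a h i).integral_comp (measurableEmbedding_addLeft _)]

theorem sum_edist_gridAverage_le [NormedSpace ℝ E] (hh : 0 < h) {m k : ℕ} {f : ℝ → E}
    (hf : IntegrableOn f (Ioo (a + m * h) (a + (k + 1) * h))) :
    ∑ i ∈ Finset.Ico m k, edist (gridAverage a h f (i + 1)) (gridAverage a h f i) ≤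
      eVariationOn f (Ioo (a + m * h) (a + (k + 1) * h)) := by
  have : NeZero (volume (Ioo 0 h)) := ⟨(isOpen_Ioo.measure_pos volume (nonempty_Ioo.2 hh)).ne'⟩
  let p (t : ℝ) (i : ℕ) : ℝ := a + i * h + t
  have hp (t : ℝ) : Monotone (p t) := fun i j hij => by
    dsimp only [p]
    gcongr
  have hmem {i : ℕ} (hi : i ∈ Icc m k) {t : ℝ} (ht : t ∈ Ioo 0 h) :
      p t i ∈ Ioo (a + m * h) (a + (k + 1) * h) := by
    have hmi : (m : ℝ) * h ≤ i * h := by gcongr; exact hi.1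
    have hik : (i : ℝ) * h ≤ k * h := by gcongr; exact hi.2
    exact ⟨by linarith [ht.1], by linarith [ht.2]⟩
  have hint {i : ℕ} (hi : i ∈ Icc m k) :
      Integrable (fun t => f (p t i)) (volume.restrict (Ioo 0 h)) := by
    refine (measurePreserving_restrict_gridCell a h i).integrable_comp_of_integrable
      (hf.mono_set (Ioo_subset_Ioo ?_ ?_))
    · gcongr; exact hi.1
    · gcongr; exact hi.2
  simp only [gridAverage_eq_setAverage_Ioo_zero hh]
  refine sum_edist_average_le (fun i hi => hint ?_) (fun i hi => hint ?_) ?_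
  · exact ⟨(Finset.mem_Ico.1 hi).1.trans i.le_succ, (Finset.mem_Ico.1 hi).2⟩
  · exact ⟨(Finset.mem_Ico.1 hi).1, (Finset.mem_Ico.1 hi).2.le⟩
  · filter_upwards [ae_restrict_mem measurableSet_Ioo] with t ht
    exact eVariationOn.sum_le_of_monotoneOn_Icc ((hp t).monotoneOn _) fun i hi => hmem hi ht

theorem integral_gridStep [NormedSpace ℝ E] [CompleteSpace E] (hh : 0 < h) (N : ℕ) (v : ℕ → E) :
    ∫ x in Ioo a (a + N * h), gridStep a h v x = h • ∑ i ∈ Finset.range N, v i := by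
  rw [setIntegral_eq_sum_gridCell hh ((memLp_gridStep hh N v 1).integrable le_rfl),
    Finset.smul_sum]
  refine Finset.sum_congr rfl fun i _ => ?_
  have hcell : ∫ x in gridCell a h i, gridStep a h v x = ∫ _ in gridCell a h i, v i :=
    setIntegral_congr_fun measurableSet_Ioo fun x hx => gridStep_of_mem_gridCell hh hx v
  rw [hcell, setIntegral_const, volume_real_gridCell hh]

theorem ofReal_discreteVariation_gridAverage_le [NormedSpace ℝ E] (hh : 0 < h) {N : ℕ} {f : ℝ → E}
    (hf : IntegrableOn f (Ioo a (a + (N + 1 : ℕ) * h))) :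
    ENNReal.ofReal (discreteVariation N (gridAverage a h f)) ≤
      eVariationOn f (Ioo a (a + (N + 1 : ℕ) * h)) := by
  have hI : Ioo (a + (0 : ℕ) * h) (a + (N + 1) * h) = Ioo a (a + (N + 1 : ℕ) * h) := by simp
  rw [discreteVariation, ENNReal.ofReal_sum_of_nonneg fun _ _ => norm_nonneg _]
  simp only [← dist_eq_norm, ← edist_dist, Finset.range_eq_Ico]
  exact (sum_edist_gridAverage_le hh (hI ▸ hf)).trans_eq (hI ▸ rfl)

theorem edist_gridStep_le [NormedSpace ℝ E] (hh : 0 < h) {N : ℕ} {f : ℝ → E}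
    (hf : IntegrableOn f (Ioo a (a + (N + 1 : ℕ) * h))) {v : ℕ → E}
    (hv : ∀ i < N, ‖v (i + 1) - v i‖ ≤ ‖gridAverage a h f (i + 1) - gridAverage a h f i‖) {x y : ℝ}
    (hx : a ≤ x) (hxy : x ≤ y) (hy : y < a + (N + 1 : ℕ) * h) :
    edist (gridStep a h v x) (gridStep a h v y) ≤ eVariationOn f (Icc (x - h) (y + h)) := by
  have hxm := mem_Ico_gridIndex hh hx
  have hyk := mem_Ico_gridIndex hh (hx.trans hxy)
  have hmk : gridIndex a h x ≤ gridIndex a h y := monotone_gridIndex hh hxy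
  have hkN : gridIndex a h y < N + 1 := gridIndex_lt hh (hx.trans hxy) hy
  set m := gridIndex a h x
  set k := gridIndex a h y
  have hsub : Ioo (a + m * h) (a + (k + 1) * h) ⊆ Ioo a (a + (N + 1 : ℕ) * h) := by
    refine Ioo_subset_Ioo (le_add_of_nonneg_right (by positivity)) ?_
    gcongr
    exact_mod_cast hkN
  calc edist (v m) (v k) ≤ ∑ i ∈ Finset.Ico m k, edist (v i) (v (i + 1)) :=
        edist_le_Ico_sum_edist v hmk
    _ ≤ ∑ i ∈ Finset.Ico m k, edist (gridAverage a h f (i + 1)) (gridAverage a h f i) :=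
        Finset.sum_le_sum fun i hi => by
          rw [edist_comm, edist_dist, edist_dist, dist_eq_norm, dist_eq_norm]
          exact ENNReal.ofReal_le_ofReal (hv i (by have := (Finset.mem_Ico.1 hi).2; omega))
    _ ≤ eVariationOn f (Ioo (a + m * h) (a + (k + 1) * h)) :=
        sum_edist_gridAverage_le hh (hf.mono_set hsub)
    _ ≤ eVariationOn f (Icc (x - h) (y + h)) :=
        eVariationOn.mono f (Ioo_subset_Icc_self.trans
          (Icc_subset_Icc (by linarith [hxm.2]) (by linarith [hyk.1])))

variable [InnerProductSpace ℝ E] [CompleteSpace E]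

theorem integral_norm_gridStep_sub_sq (hh : 0 < h) {N : ℕ} {f : ℝ → E}
    (hf : MemLp f 2 (volume.restrict (Ioo a (a + N * h)))) (v : ℕ → E) :
    ∫ x in Ioo a (a + N * h), ‖gridStep a h v x - f x‖ ^ 2 =
      h * ∑ i ∈ Finset.range N, ‖v i - gridAverage a h f i‖ ^ 2 +
        ∫ x in Ioo a (a + N * h), ‖gridStep a h (gridAverage a h f) x - f x‖ ^ 2 := by
  have hint (v : ℕ → E) : IntegrableOn (fun x => ‖gridStep a h v x - f x‖ ^ 2)
      (Ioo a (a + N * h)) := ((memLp_gridStep hh N v 2).sub hf).integrable_norm_pow two_ne_zero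
  have hcell (v : ℕ → E) (i : ℕ) : ∫ x in gridCell a h i, ‖gridStep a h v x - f x‖ ^ 2 =
      ∫ x in gridCell a h i, ‖v i - f x‖ ^ 2 :=
    setIntegral_congr_fun measurableSet_Ioo fun x hx => by
      simp only [gridStep_of_mem_gridCell hh hx]
  simp only [setIntegral_eq_sum_gridCell hh (hint _), hcell, Finset.mul_sum,
    ← Finset.sum_add_distrib]
  refine Finset.sum_congr rfl fun i hi => ?_
  have hfi := hf.mono_measure
    (Measure.restrict_mono (gridCell_subset hh (Finset.mem_range.1 hi)) le_rfl)
  have : IsFiniteMeasure (volume.restrict (gridCell a h i)) := by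
    unfold gridCell
    infer_instance
  rw [integral_norm_const_sub_sq hfi, measureReal_restrict_apply_univ, volume_real_gridCell hh,
    gridAverage]

theorem integral_norm_gridStep_gridAverage_sub_sq_le (hh : 0 < h) {N : ℕ} {f : ℝ → E}
    (hf : MemLp f 2 (volume.restrict (Ioo a (a + N * h)))) (v : ℕ → E) :
    ∫ x in Ioo a (a + N * h), ‖gridStep a h (gridAverage a h f) x - f x‖ ^ 2 ≤
      ∫ x in Ioo a (a + N * h), ‖gridStep a h v x - f x‖ ^ 2 := by
  rw [integral_norm_gridStep_sub_sq hh hf v]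
  exact le_add_of_nonneg_left (by positivity)

theorem integral_norm_gridStep_gridAverage_sub_sq_le_of_forall_norm_sub_le (hh : 0 < h) {N : ℕ}
    {f g : ℝ → E} (hf : MemLp f 2 (volume.restrict (Ioo a (a + N * h))))
    (hg : MemLp g 2 (volume.restrict (Ioo a (a + N * h)))) {η : ℝ}
    (hgη : ∀ x y, dist x y ≤ h → ‖g x - g y‖ ≤ η) :
    ∫ x in Ioo a (a + N * h), ‖gridStep a h (gridAverage a h f) x - f x‖ ^ 2 ≤
      2 * (∫ x in Ioo a (a + N * h), ‖f x - g x‖ ^ 2) + 2 * (N * h) * η ^ 2 := by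
  let v (i : ℕ) : E := g (a + i * h)
  have hfg : Integrable (fun x => 2 * ‖f x - g x‖ ^ 2) (volume.restrict (Ioo a (a + N * h))) :=
    ((hf.sub hg).integrable_norm_pow two_ne_zero).const_mul 2
  have hη : Integrable (fun _ => 2 * η ^ 2) (volume.restrict (Ioo a (a + N * h))) :=
    integrable_const _
  have hsum : Integrable (fun x => 2 * ‖f x - g x‖ ^ 2 + 2 * η ^ 2)
      (volume.restrict (Ioo a (a + N * h))) := hfg.add hη
  have hpointwise {x : ℝ} (hx : x ∈ Ioo a (a + N * h)) :
      ‖gridStep a h v x - f x‖ ^ 2 ≤ 2 * ‖f x - g x‖ ^ 2 + 2 * η ^ 2 := by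
    obtain ⟨hle, hlt⟩ := mem_Ico_gridIndex hh hx.1.le
    have hvg : ‖gridStep a h v x - g x‖ ≤ η := by
      refine hgη _ _ ?_
      rw [dist_comm, Real.dist_eq, abs_of_nonneg (sub_nonneg.2 hle)]
      linarith
    have htri := norm_sub_le_norm_sub_add_norm_sub (gridStep a h v x) (g x) (f x)
    rw [norm_sub_rev (g x)] at htri
    nlinarith [norm_nonneg (gridStep a h v x - f x), norm_nonneg (gridStep a h v x - g x),
      sq_nonneg (η - ‖f x - g x‖)]
  calc ∫ x in Ioo a (a + N * h), ‖gridStep a h (gridAverage a h f) x - f x‖ ^ 2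
      ≤ ∫ x in Ioo a (a + N * h), ‖gridStep a h v x - f x‖ ^ 2 :=
        integral_norm_gridStep_gridAverage_sub_sq_le hh hf v
    _ ≤ ∫ x in Ioo a (a + N * h), (2 * ‖f x - g x‖ ^ 2 + 2 * η ^ 2) :=
        setIntegral_mono_on (((memLp_gridStep hh N v 2).sub hf).integrable_norm_pow two_ne_zero)
          hsum measurableSet_Ioo fun _ => hpointwise
    _ = 2 * (∫ x in Ioo a (a + N * h), ‖f x - g x‖ ^ 2) + 2 * (N * h) * η ^ 2 := by
        rw [integral_add hfg hη, integral_const_mul, setIntegral_const,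
          Real.volume_real_Ioo_of_le (le_add_of_nonneg_right (by positivity)), smul_eq_mul]
        ring

theorem tendsto_integral_norm_gridStep_gridAverage_sub_sq {a b : ℝ} (hab : a < b) {f : ℝ → E}
    (hf : MemLp f 2 (volume.restrict (Ioo a b))) :
    Tendsto (fun N : ℕ => ∫ x in Ioo a b,
      ‖gridStep a (gridMesh a b N) (gridAverage a (gridMesh a b N) f) x - f x‖ ^ 2)
      atTop (𝓝 0) := by
  have hbound {ε : ℝ} (hε : 0 < ε) : ∀ᶠ N : ℕ in atTop, ∫ x in Ioo a b,
      ‖gridStep a (gridMesh a b N) (gridAverage a (gridMesh a b N) f) x - f x‖ ^ 2 ≤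
        2 * ε + 2 * (b - a) * ε ^ 2 := by
    obtain ⟨g, hg_supp, hfg, hg_cont, hg⟩ := MemLp.exists_hasCompactSupport_integral_rpow_sub_le
      two_pos (by simpa using hf) hε
    simp only [Real.rpow_two, ENNReal.ofReal_ofNat] at hfg hg
    obtain ⟨δ, hδ, hgδ⟩ := Metric.uniformContinuous_iff.1
      (hg_supp.uniformContinuous_of_continuous hg_cont) ε hε
    filter_upwards [((tendsto_gridMesh hab).mono_right
      nhdsWithin_le_nhds).eventually_lt_const hδ] with N hN
    have hb := add_succ_mul_gridMesh a b N
    rw [← hb] at hf hg hfg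
    have hstep := integral_norm_gridStep_gridAverage_sub_sq_le_of_forall_norm_sub_le
      (gridMesh_pos hab N) hf hg
      fun x y hxy => (dist_eq_norm (g x) (g y)).symm.trans_le (hgδ (hxy.trans_lt hN)).le
    rw [hb] at hstep hfg
    rw [eq_sub_of_add_eq' hb] at hstep
    linarith
  have hlim : Tendsto (fun ε : ℝ => 2 * ε + 2 * (b - a) * ε ^ 2) (𝓝[>] 0) (𝓝 0) :=
    (Continuous.tendsto' (by fun_prop) 0 0 (by simp)).mono_left nhdsWithin_le_nhds
  refine tendsto_order.2 ⟨fun δ hδ => .of_forall fun N => hδ.trans_le (by positivity),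
    fun δ hδ => ?_⟩
  obtain ⟨ε, hεδ, hε : 0 < ε⟩ := ((hlim.eventually_lt_const hδ).and self_mem_nhdsWithin).exists
  exact (hbound hε).mono fun N hN => hN.trans_lt hεδ

end Grid

section RudinOsherFatemi

theorem norm_sub_sq_le_sub_midpoint {E : Type*} [NormedAddCommGroup E] [InnerProductSpace ℝ E]
    (u v f g : E) :
    ‖u - v‖ ^ 2 ≤ 4 * (‖u - f‖ ^ 2 + ‖v - g‖ ^ 2 -
      (‖midpoint ℝ u v - f‖ ^ 2 + ‖midpoint ℝ u v - g‖ ^ 2) + ‖f - g‖ ^ 2) := by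
  set e := midpoint ℝ u v - v with he
  have hu : u - f = (midpoint ℝ u v - f) + e := by
    rw [he, midpoint_eq_smul_add, invOf_eq_inv]
    module
  have hv : v - g = (midpoint ℝ u v - g) - e := by
    rw [he]
    module
  have huv : u - v = (2 : ℝ) • e := by
    rw [he, midpoint_eq_smul_add, invOf_eq_inv]
    module
  have hfg : ‖g - f + e‖ ^ 2 = ‖f - g‖ ^ 2 + 2 * (inner ℝ (midpoint ℝ u v - f) e -
      inner ℝ (midpoint ℝ u v - g) e) + ‖e‖ ^ 2 := by
    rw [norm_add_sq_real, ← inner_sub_left, sub_sub_sub_cancel_left, norm_sub_rev]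
  rw [hu, hv, huv, norm_add_sq_real (_ - f), norm_sub_sq_real (_ - g), norm_smul, Real.norm_ofNat]
  linarith [sq_nonneg ‖g - f + e‖]

theorem memLp_midpoint {α E : Type*} [MeasurableSpace α] {μ : Measure α} [NormedAddCommGroup E]
    [NormedSpace ℝ E] {u v : α → E} {p : ℝ≥0∞} (hu : MemLp u p μ) (hv : MemLp v p μ) :
    MemLp (fun x => midpoint ℝ (u x) (v x)) p μ := by
  simp only [midpoint_eq_smul_add]
  exact (hu.add hv).const_smul (⅟2 : ℝ)

theorem exists_seq_tendsto_ae_of_tendsto_integral_norm_sub_sq {α E : Type*} [MeasurableSpace α]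
    {μ : Measure α} [NormedAddCommGroup E] {w : ℕ → α → E} {u : α → E}
    (hw : ∀ k, MemLp (w k) 2 μ) (hu : MemLp u 2 μ)
    (h : Tendsto (fun k => ∫ x, ‖w k x - u x‖ ^ 2 ∂μ) atTop (𝓝 0)) :
    ∃ ns : ℕ → ℕ, StrictMono ns ∧ ∀ᵐ x ∂μ, Tendsto (fun k => w (ns k) x) atTop (𝓝 (u x)) := by
  refine (tendstoInMeasure_of_tendsto_eLpNorm two_ne_zero (fun k => (hw k).1) hu.1
    ?_).exists_seq_tendsto_ae
  have hnorm (k : ℕ) : eLpNorm (w k - u) 2 μ =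
      ENNReal.ofReal (√(∫ x, ‖w k x - u x‖ ^ 2 ∂μ)) := by
    rw [((hw k).sub hu).eLpNorm_eq_integral_rpow_norm two_ne_zero ENNReal.ofNat_ne_top,
      Real.sqrt_eq_rpow]
    simp
  simp only [hnorm]
  simpa using ENNReal.tendsto_ofReal h.sqrt

theorem ae_continuousAt_of_boundedVariationOn {E : Type*} [NormedAddCommGroup E] [NormedSpace ℝ E]
    [FiniteDimensional ℝ E] {f : ℝ → E} {s : Set ℝ} (hs : IsOpen s) (hf : BoundedVariationOn f s) :
    ∀ᵐ x, x ∈ s → ContinuousAt f x := by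
  filter_upwards [hf.locallyBoundedVariationOn.ae_differentiableWithinAt_of_mem] with x hx hxs
  exact (hx hxs).continuousWithinAt.continuousAt (hs.mem_nhds hxs)

variable {n : ℕ} {lam a b : ℝ} {f g u v w : ℝ → EuclideanSpace ℝ (Fin n)}

theorem sqIntOn_iff_memLp (hw : Measurable w) {S : Set ℝ} :
    SqIntOn w S ↔ MemLp w 2 (volume.restrict S) :=
  (memLp_two_iff_integrable_sq_norm hw.aestronglyMeasurable).symm

namespace IsMinimizer

theorem memLp (hu : IsMinimizer lam a b f u) : MemLp u 2 (volume.restrict (Ioo a b)) :=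
  (sqIntOn_iff_memLp hu.1).1 hu.2.1

theorem eVariationOn_ne_top (hu : IsMinimizer lam a b f u) : eVariationOn u (Ioo a b) ≠ ⊤ := by
  have h0 := hu.2.2 0 measurable_zero ((sqIntOn_iff_memLp measurable_zero).2 MemLp.zero)
  have hconst : eVariationOn (0 : ℝ → EuclideanSpace ℝ (Fin n)) (Ioo a b) = 0 :=
    eVariationOn.constant_on <| subsingleton_of_subset_singleton (a := 0) <| by
      rintro _ ⟨x, -, rfl⟩
      rfl
  rw [rofEnergy, rofEnergy, hconst, zero_add] at h0
  exact ((le_self_add.trans h0).trans_lt ENNReal.ofReal_lt_top).ne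

theorem integral_add_integral_le_midpoint (hlam : 0 < lam) (hu : IsMinimizer lam a b f u)
    (hv : IsMinimizer lam a b g v) :
    (∫ x in Ioo a b, ‖u x - f x‖ ^ 2) + ∫ x in Ioo a b, ‖v x - g x‖ ^ 2 ≤
      (∫ x in Ioo a b, ‖midpoint ℝ (u x) (v x) - f x‖ ^ 2) +
        ∫ x in Ioo a b, ‖midpoint ℝ (u x) (v x) - g x‖ ^ 2 := by
  let m (x : ℝ) : EuclideanSpace ℝ (Fin n) := midpoint ℝ (u x) (v x)
  have hm : Measurable m := by
    simp only [m, midpoint_eq_smul_add]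
    exact (hu.1.add hv.1).const_smul (⅟2 : ℝ)
  have hm_sq : SqIntOn m (Ioo a b) :=
    (sqIntOn_iff_memLp hm).2 (memLp_midpoint hu.memLp hv.memLp)
  have hκ : 0 < 1 / (2 * lam) := by positivity
  have hpos (w f : ℝ → EuclideanSpace ℝ (Fin n)) :
      0 ≤ 1 / (2 * lam) * ∫ x in Ioo a b, ‖w x - f x‖ ^ 2 := by positivity
  have henergy : rofEnergy lam a b f u + rofEnergy lam a b g v ≤
      rofEnergy lam a b f m + rofEnergy lam a b g m :=
    add_le_add (hu.2.2 m hm hm_sq) (hv.2.2 m hm hm_sq)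
  simp only [rofEnergy] at henergy
  rw [add_add_add_comm, add_add_add_comm (eVariationOn m _),
    ← two_mul (eVariationOn m _)] at henergy
  replace henergy := henergy.trans (add_le_add_left (two_mul_eVariationOn_midpoint_le u v _) _)
  rw [ENNReal.add_le_add_iff_left (ENNReal.add_ne_top.2 ⟨hu.eVariationOn_ne_top,
    hv.eVariationOn_ne_top⟩), ← ENNReal.ofReal_add (hpos u f) (hpos v g),
    ← ENNReal.ofReal_add (hpos m f) (hpos m g),
    ENNReal.ofReal_le_ofReal_iff (add_nonneg (hpos m f) (hpos m g)), ← mul_add, ← mul_add,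
    mul_le_mul_iff_right₀ hκ] at henergy
  exact henergy

theorem integral_norm_sub_sq_le (hlam : 0 < lam) (hf : MemLp f 2 (volume.restrict (Ioo a b)))
    (hg : MemLp g 2 (volume.restrict (Ioo a b))) (hu : IsMinimizer lam a b f u)
    (hv : IsMinimizer lam a b g v) :
    ∫ x in Ioo a b, ‖u x - v x‖ ^ 2 ≤ 4 * ∫ x in Ioo a b, ‖f x - g x‖ ^ 2 := by
  let m (x : ℝ) : EuclideanSpace ℝ (Fin n) := midpoint ℝ (u x) (v x)
  have hm : MemLp m 2 (volume.restrict (Ioo a b)) := memLp_midpoint hu.memLp hv.memLp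
  have hint {w w' : ℝ → EuclideanSpace ℝ (Fin n)} (hw : MemLp w 2 (volume.restrict (Ioo a b)))
      (hw' : MemLp w' 2 (volume.restrict (Ioo a b))) :
      IntegrableOn (fun x => ‖w x - w' x‖ ^ 2) (Ioo a b) :=
    (hw.sub hw').integrable_norm_pow two_ne_zero
  have hdata : IntegrableOn (fun x => ‖u x - f x‖ ^ 2 + ‖v x - g x‖ ^ 2) (Ioo a b) :=
    (hint hu.memLp hf).add (hint hv.memLp hg)
  have hmid : IntegrableOn (fun x => ‖m x - f x‖ ^ 2 + ‖m x - g x‖ ^ 2) (Ioo a b) :=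
    (hint hm hf).add (hint hm hg)
  have hgap : IntegrableOn (fun x => ‖u x - f x‖ ^ 2 + ‖v x - g x‖ ^ 2 -
      (‖m x - f x‖ ^ 2 + ‖m x - g x‖ ^ 2)) (Ioo a b) := hdata.sub hmid
  calc ∫ x in Ioo a b, ‖u x - v x‖ ^ 2
      ≤ ∫ x in Ioo a b, 4 * (‖u x - f x‖ ^ 2 + ‖v x - g x‖ ^ 2 -
          (‖m x - f x‖ ^ 2 + ‖m x - g x‖ ^ 2) + ‖f x - g x‖ ^ 2) :=
        integral_mono (hint hu.memLp hv.memLp) ((hgap.add (hint hf hg)).const_mul 4)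
          fun x => norm_sub_sq_le_sub_midpoint (u x) (v x) (f x) (g x)
    _ = 4 * ((∫ x in Ioo a b, ‖u x - f x‖ ^ 2) + (∫ x in Ioo a b, ‖v x - g x‖ ^ 2) -
          ((∫ x in Ioo a b, ‖m x - f x‖ ^ 2) + ∫ x in Ioo a b, ‖m x - g x‖ ^ 2) +
          ∫ x in Ioo a b, ‖f x - g x‖ ^ 2) := by
        rw [integral_const_mul, integral_add hgap (hint hf hg), integral_sub hdata hmid,
          integral_add (hint hu.memLp hf) (hint hv.memLp hg),
          integral_add (hint hm hf) (hint hm hg)]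
    _ ≤ 4 * ∫ x in Ioo a b, ‖f x - g x‖ ^ 2 := by
        linarith [integral_add_integral_le_midpoint hlam hu hv]

end IsMinimizer

variable {h : ℝ}

theorem rofEnergy_gridStep_le (hlam : 0 < lam) (hh : 0 < h) (N : ℕ)
    (F v : ℕ → EuclideanSpace ℝ (Fin n)) :
    rofEnergy lam a (a + (N + 1 : ℕ) * h) (gridStep a h F) (gridStep a h v) ≤
      ENNReal.ofReal (discreteEnergy (h / (2 * lam)) N F v) := by
  have hfidelity : ∫ x in Ioo a (a + (N + 1 : ℕ) * h), ‖gridStep a h v x - gridStep a h F x‖ ^ 2 =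
      h * ∑ i ∈ Finset.range (N + 1), ‖v i - F i‖ ^ 2 :=
    integral_gridStep hh (N + 1) fun i => ‖v i - F i‖ ^ 2
  rw [rofEnergy, hfidelity, discreteEnergy,
    ENNReal.ofReal_add (discreteVariation_nonneg N v) (by positivity), ← mul_assoc,
    one_div_mul_eq_div]
  gcongr
  exact eVariationOn_gridStep_le hh N v

theorem ofReal_discreteEnergy_gridAverage_le (hlam : 0 < lam) (hh : 0 < h) {N : ℕ}
    (F : ℕ → EuclideanSpace ℝ (Fin n))
    (hw : MemLp w 2 (volume.restrict (Ioo a (a + (N + 1 : ℕ) * h)))) :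
    ENNReal.ofReal (discreteEnergy (h / (2 * lam)) N F (gridAverage a h w)) ≤
      rofEnergy lam a (a + (N + 1 : ℕ) * h) (gridStep a h F) w := by
  have hfidelity : h * ∑ i ∈ Finset.range (N + 1), ‖gridAverage a h w i - F i‖ ^ 2 ≤
      ∫ x in Ioo a (a + (N + 1 : ℕ) * h), ‖w x - gridStep a h F x‖ ^ 2 := by
    simp only [norm_sub_rev (w _), norm_sub_rev (gridAverage a h w _)]
    rw [integral_norm_gridStep_sub_sq hh hw]
    exact le_add_of_nonneg_right (by positivity)
  rw [rofEnergy, discreteEnergy, ENNReal.ofReal_add (discreteVariation_nonneg N _) (by positivity),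
    ← one_div_mul_eq_div, mul_assoc]
  gcongr
  exact ofReal_discreteVariation_gridAverage_le hh (hw.integrable one_le_two)

theorem isMinimizer_gridStep (hlam : 0 < lam) (hh : 0 < h) {N : ℕ}
    {F v : ℕ → EuclideanSpace ℝ (Fin n)}
    (hv : ∀ w, discreteEnergy (h / (2 * lam)) N F v ≤ discreteEnergy (h / (2 * lam)) N F w) :
    IsMinimizer lam a (a + (N + 1 : ℕ) * h) (gridStep a h F) (gridStep a h v) := by
  have hmeas : Measurable (gridStep a h v) := (stronglyMeasurable_gridStep a h v).measurable
  refine ⟨hmeas, (sqIntOn_iff_memLp hmeas).2 (memLp_gridStep hh (N + 1) v 2), fun w hw hw' => ?_⟩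
  calc _ ≤ ENNReal.ofReal (discreteEnergy (h / (2 * lam)) N F v) :=
        rofEnergy_gridStep_le hlam hh N F v
    _ ≤ ENNReal.ofReal (discreteEnergy (h / (2 * lam)) N F (gridAverage a h w)) :=
        ENNReal.ofReal_le_ofReal (hv _)
    _ ≤ _ := ofReal_discreteEnergy_gridAverage_le hlam hh F ((sqIntOn_iff_memLp hw).1 hw')

theorem exists_isMinimizer_gridStep_gridAverage (hlam : 0 < lam) (hh : 0 < h) (N : ℕ)
    (hf : IntegrableOn f (Ioo a (a + (N + 1 : ℕ) * h))) :
    ∃ v : ℕ → EuclideanSpace ℝ (Fin n),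
      IsMinimizer lam a (a + (N + 1 : ℕ) * h) (gridStep a h (gridAverage a h f)) (gridStep a h v) ∧
      ∀ x ∈ Ioo a (a + (N + 1 : ℕ) * h), ∀ y ∈ Ioo a (a + (N + 1 : ℕ) * h), x ≤ y →
        edist (gridStep a h v x) (gridStep a h v y) ≤ eVariationOn f (Icc (x - h) (y + h)) := by
  have hκ : 0 < h / (2 * lam) := by positivity
  obtain ⟨v, hv⟩ := exists_forall_discreteEnergy_le hκ N (gridAverage a h f)
  exact ⟨v, isMinimizer_gridStep hlam hh hv, fun x hx y hy hxy => edist_gridStep_le hh hf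
    (fun i hi => norm_sub_le_of_forall_discreteEnergy_le hκ hi hv) hx.1.le hxy hy.2⟩

theorem IsMinimizer.exists_seq_tendsto_ae_edist_le (hab : a < b) (hlam : 0 < lam)
    (hf : MemLp f 2 (volume.restrict (Ioo a b))) (hu : IsMinimizer lam a b f u) :
    ∃ (w : ℕ → ℝ → EuclideanSpace ℝ (Fin n)) (h : ℕ → ℝ), Tendsto h atTop (𝓝[>] 0) ∧
      (∀ᵐ x ∂(volume.restrict (Ioo a b)), Tendsto (fun k => w k x) atTop (𝓝 (u x))) ∧
      ∀ k, ∀ x ∈ Ioo a b, ∀ y ∈ Ioo a b, x ≤ y →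
        edist (w k x) (w k y) ≤ eVariationOn f (Icc (x - h k) (y + h k)) := by
  let F (N : ℕ) : ℝ → EuclideanSpace ℝ (Fin n) :=
    gridStep a (gridMesh a b N) (gridAverage a (gridMesh a b N) f)
  have hF (N : ℕ) : MemLp (F N) 2 (volume.restrict (Ioo a b)) := by
    have hstep := memLp_gridStep (a := a) (gridMesh_pos hab N) (N + 1)
      (gridAverage a (gridMesh a b N) f) 2
    rwa [add_succ_mul_gridMesh] at hstep
  have hexists (N : ℕ) : ∃ w, IsMinimizer lam a b (F N) w ∧
      ∀ x ∈ Ioo a b, ∀ y ∈ Ioo a b, x ≤ y →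
        edist (w x) (w y) ≤ eVariationOn f (Icc (x - gridMesh a b N) (y + gridMesh a b N)) := by
    have hv := exists_isMinimizer_gridStep_gridAverage (f := f) (a := a) hlam (gridMesh_pos hab N) N
    rw [add_succ_mul_gridMesh] at hv
    obtain ⟨v, hv⟩ := hv (hf.integrable one_le_two)
    exact ⟨_, hv⟩
  choose w hw hwf using hexists
  have hwu : Tendsto (fun N => ∫ x in Ioo a b, ‖w N x - u x‖ ^ 2) atTop (𝓝 0) := by
    have hlim := (tendsto_integral_norm_gridStep_gridAverage_sub_sq hab hf).const_mul 4
    rw [mul_zero] at hlim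
    exact squeeze_zero (fun N => by positivity)
      (fun N => (hw N).integral_norm_sub_sq_le hlam (hF N) hf hu) hlim
  obtain ⟨ns, hns, hae⟩ :=
    exists_seq_tendsto_ae_of_tendsto_integral_norm_sub_sq (fun N => (hw N).memLp) hu.memLp hwu
  exact ⟨_, _, (tendsto_gridMesh hab).comp hns.tendsto_atTop, hae, fun k => hwf (ns k)⟩

end RudinOsherFatemi

/-- if `f` has bounded variation on an open subinterval `U = Ioo c d` of `I`,
then the ROF minimizer `u` has a representative `ubar` (equal to `u` a.e. on `I`) whose
total variation over every closed subinterval `[c',d'] ⊆ U` is at most that of `f`. -/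
theorem tv_minimizer_le_tv_datum_on_closed_subintervals
    {n : ℕ} (hn : 1 ≤ n) (a b : ℝ) (hab : a < b) (lam : ℝ) (hlam : 0 < lam)
    (f : ℝ → EuclideanSpace ℝ (Fin n)) (hf_meas : Measurable f)
    (hf_sq : SqIntOn f (Set.Ioo a b))
    (c d : ℝ) (hU : Set.Ioo c d ⊆ Set.Ioo a b)
    (hfBV : eVariationOn f (Set.Ioo c d) < ⊤)
    (u : ℝ → EuclideanSpace ℝ (Fin n)) (hu : IsMinimizer lam a b f u) :
    ∃ ubar : ℝ → EuclideanSpace ℝ (Fin n),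
      (∀ᵐ x ∂(MeasureTheory.volume.restrict (Set.Ioo a b)), ubar x = u x) ∧
      ∀ c' d' : ℝ, Set.Icc c' d' ⊆ Set.Ioo c d →
        eVariationOn ubar (Set.Icc c' d') ≤ eVariationOn f (Set.Icc c' d') := by
  have hf : BoundedVariationOn f (Ioo c d) := hfBV.ne
  obtain ⟨w, h, hh, hwu, hwf⟩ :=
    hu.exists_seq_tendsto_ae_edist_le hab hlam ((sqIntOn_iff_memLp hf_meas).1 hf_sq)
  let G : Set ℝ := {x ∈ Ioo c d | Tendsto (fun k => w k x) atTop (𝓝 (u x)) ∧ ContinuousAt f x}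
  have hG : ∀ᵐ x, x ∈ Ioo c d → x ∈ G := by
    filter_upwards [(ae_restrict_iff' measurableSet_Ioo).1 hwu,
      ae_continuousAt_of_boundedVariationOn isOpen_Ioo hf] with x hwx hfx hx
    exact ⟨hx, hwx (hU hx), hfx hx⟩
  have edist_le (x) (hx : x ∈ G) (y) (hy : y ∈ G) (hxy : x ≤ y) :
      edist (u x) (u y) ≤ eVariationOn f (Icc x y) :=
    le_of_tendsto_of_tendsto' (hx.2.1.edist hy.2.1)
      ((tendsto_eVariationOn_Icc_sub_add isOpen_Ioo ordConnected_Ioo hf hx.1 hy.1 hxy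
        hx.2.2 hy.2.2).comp hh) fun k => hwf k x (hU hx.1) y (hU hy.1) hxy
  obtain ⟨v, hvu, hv⟩ :=
    exists_ae_eq_forall_eVariationOn_le ordConnected_Ioo hf.locallyBoundedVariationOn
      (sep_subset _ _) hG edist_le
  exact ⟨v, ae_restrict_of_ae hvu, hv⟩
end
end
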